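/- arXiv:1506.08317 — 2 statements merged into one kernel-verified Lean document; each statement's English description precedes it below -/
import Mathlib

section
/- Let Φ be a Young function such that lim_{t→∞} Φ(t)/(t·log log(e^e + t)) = 0. Then for every constant c > 0 there exist a weight w on ℝ, a function f with ∫_ℝ |f|·M_Φ w dx < ∞, and λ > 0 such that w({x ∈ ℝ : |Hf(x)| > λ}) > (c/λ) ∫_ℝ |f|·M_Φ w dx. (In particular, the weak-type inequality w({|Hf|>λ}) ≤ (c/λ)∫|f| M_Φ w fails for such Φ.) -/
open MeasureTheory Set Filter Topology
open scoped ENNReal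

noncomputable section

namespace RT

/-- The Hilbert transform `Hf(x)`, defined as the principal-value limit
`lim_{ε→0⁺} ∫_{|x-y|>ε} f(y)/(x-y) dy` (junk value at points where the limit
does not exist). -/
def Hil (f : ℝ → ℝ) (x : ℝ) : ℝ :=
  limUnder (𝓝[>] (0 : ℝ)) fun ε => ∫ y in {y : ℝ | ε < |x - y|}, f y / (x - y)

/-- The (uncentered) Hardy–Littlewood maximal function over bounded intervals:
`Mf(x) = sup_{I ∋ x} (1/|I|) ∫_I |f|`. -/
def HLMax (f : ℝ → ℝ) (x : ℝ) : ℝ≥0∞ :=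
  ⨆ (a : ℝ) (b : ℝ) (_ : a < b) (_ : x ∈ Icc a b),
    (ENNReal.ofReal (b - a))⁻¹ * ∫⁻ y in Ioo a b, ENNReal.ofReal |f y|

/-- `M_r f = (M(|f|^r))^{1/r}`. -/
def Mr (r : ℝ) (f : ℝ → ℝ) (x : ℝ) : ℝ≥0∞ :=
  HLMax (fun y => |f y| ^ r) x ^ (1 / r)

/-- The Orlicz maximal operator
`M_Φ f(x) = sup_{I ∋ x} inf {λ > 0 : (1/|I|) ∫_I Φ(|f|/λ) ≤ 1}`. -/
def MOrlicz (Φ : ℝ → ℝ) (f : ℝ → ℝ) (x : ℝ) : ℝ≥0∞ :=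
  ⨆ (a : ℝ) (b : ℝ) (_ : a < b) (_ : x ∈ Icc a b),
    sInf {lam : ℝ≥0∞ | ∃ l : ℝ, 0 < l ∧ lam = ENNReal.ofReal l ∧
      (∫⁻ y in Ioo a b, ENNReal.ofReal (Φ (|f y| / l))) ≤ ENNReal.ofReal (b - a)}

/-- The centered maximal operator with respect to a weight `v`:
`M^c_v h(x) = sup_{ρ>0} (1/v(B(x,ρ))) ∫_{B(x,ρ)} |h| v`. -/
def Mc (v h : ℝ → ℝ) (x : ℝ) : ℝ≥0∞ :=
  ⨆ (ρ : ℝ) (_ : 0 < ρ),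
    (∫⁻ y in Ioo (x - ρ) (x + ρ), ENNReal.ofReal (v y))⁻¹ *
      ∫⁻ y in Ioo (x - ρ) (x + ρ), ENNReal.ofReal |h y| * ENNReal.ofReal (v y)

/-- A Young function: convex, increasing, `Φ(0) = 0`, `Φ(t)/t → ∞`. -/
structure IsYoung (Φ : ℝ → ℝ) : Prop where
  convexOn : ConvexOn ℝ (Ici 0) Φ
  mono : MonotoneOn Φ (Ici 0)
  map_zero : Φ 0 = 0
  superlinear : Tendsto (fun t => Φ t / t) atTop atTop

/-- A weight: a nonnegative locally integrable function on `ℝ`. -/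
def IsWeight (w : ℝ → ℝ) : Prop :=
  (∀ x, 0 ≤ w x) ∧ LocallyIntegrable w volume

/-! Triadic machinery: intervals are represented by their endpoint pairs,
`(a, b)` corresponding to `[a, b)`. -/

/-- The length of the interval. -/
def len (I : ℝ × ℝ) : ℝ := I.2 - I.1

/-- The set `[a, b)` of the interval `I = (a, b)`. -/
def ivl (I : ℝ × ℝ) : Set ℝ := Ico I.1 I.2

/-- A triadic interval `[3^j n, 3^j (n+1))`, `j, n ∈ ℤ`. -/
def IsTriadic (I : ℝ × ℝ) : Prop :=
  ∃ j n : ℤ, I.1 = (3 : ℝ) ^ j * n ∧ I.2 = (3 : ℝ) ^ j * (n + 1)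

/-- The middle third `I^Δ` of `I`: same center, one third of the length. -/
def mid (I : ℝ × ℝ) : ℝ × ℝ := (I.1 + (I.2 - I.1) / 3, I.2 - (I.2 - I.1) / 3)

/-- `P` assigns to each triadic interval `J ⊆ [0,1)` a triadic interval
adjacent to `J^Δ` (on its left or on its right) with `|P J| = 3^{-k} |J|`. -/
def GoodP (k : ℕ) (P : ℝ × ℝ → ℝ × ℝ) : Prop :=
  ∀ J : ℝ × ℝ, IsTriadic J → ivl J ⊆ Ico (0 : ℝ) 1 →
    IsTriadic (P J) ∧ len (P J) = len J / 3 ^ k ∧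
      ((P J).2 = (mid J).1 ∨ (P J).1 = (mid J).2)

/-- The families `𝒥_l`: `𝒥_1 = {[0,1)}`, and `𝒥_{l+1}` consists of the `3^{k-1}`
triadic subintervals of `J^Δ` of length `|J|/3^k`, for each `J ∈ 𝒥_l`.
(`𝒥_0` is empty.) -/
def Jfam (k : ℕ) : ℕ → Set (ℝ × ℝ)
  | 0 => ∅
  | 1 => {((0 : ℝ), (1 : ℝ))}
  | l + 2 => {J' | IsTriadic J' ∧ ∃ J ∈ Jfam k (l + 1),
      len J' = len J / 3 ^ k ∧ ivl J' ⊆ ivl (mid J)}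

/-- The families `ℐ_l = {P J : J ∈ 𝒥_l}`. -/
def Ifam (k : ℕ) (P : ℝ × ℝ → ℝ × ℝ) (l : ℕ) : Set (ℝ × ℝ) :=
  P '' Jfam k l

/-- `Ω_l = ⋃_{I ∈ ℐ_l} I`. -/
def Omega (k : ℕ) (P : ℝ × ℝ → ℝ × ℝ) (l : ℕ) : Set ℝ :=
  ⋃ I ∈ Ifam k P l, ivl I

/-- The constant `3^k / (3^{k-1} + 1)`. -/
def alpha (k : ℕ) : ℝ := 3 ^ k / (3 ^ (k - 1) + 1)

/-- The Reguera–Thiele weight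
`w_k = ∑_{l=1}^∞ (3^k/(3^{k-1}+1))^l χ_{Ω_l}`. -/
def wk (k : ℕ) (P : ℝ × ℝ → ℝ × ℝ) (x : ℝ) : ℝ :=
  ∑' l : ℕ, alpha k ^ (l + 1) * (Omega k P (l + 1)).indicator (fun _ => (1 : ℝ)) x

/-! Build a self-similar pair `(w, f)` in `M` generations. At each generation the weight is carried
by the `M` equal cells of the middle third of its interval, and `f` receives a dipole of the width
of one cell placed just to the left of that middle third.

The dipole has positive Hilbert transform on the middle third, and there `exp (-H)` is at most
`(i + 1) / (i + 2) * (M / (M - 1))` on the `i`-th cell. The sum over `i` is a harmonic sum, so the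
average over the cells is about `1 - log M / M`. The dipoles of the other cells only increase `Hf`,
hence the averages multiply and after `M` generations `∫ exp (-Hf) w` is at most a multiple of
`1 / M`. By Markov's inequality half of the mass of `w` lies in `{Hf > log M / 2}`.

On the other hand `Mw` is comparable on each dipole to the density of `w` in the interval of that
dipole, so each generation contributes `O(1 / M)` to `∫ |f| Mw`, which is therefore bounded. Since
`w ≤ 3 ^ (M + 1)` and `log log (3 ^ (M + 1))` is of order `log M`, the growth of `Φ` gives
`M_Φ w ≤ ε log M * max 1 (Mw)` with `ε` arbitrarily small. The weak-type inequality at the level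
`log M / 2` would then bound `1 / 2` by a multiple of `c ε`. -/

section Affine

variable {R : ℝ}

lemma map_mul_sub_volume (hR : 0 < R) (b : ℝ) :
    Measure.map (fun x => R * x - b) volume = ENNReal.ofReal R⁻¹ • volume := by
  have hcomp : (fun x => R * x - b) = (fun y => y - b) ∘ (fun x => R * x) := rfl
  rw [hcomp, ← Measure.map_map (by fun_prop) (by fun_prop), Real.map_volume_mul_left hR.ne',
    abs_of_pos (inv_pos.2 hR), Measure.map_smul, map_sub_right_eq_self]

lemma lintegral_comp_mul_sub (hR : 0 < R) (b : ℝ) {u : ℝ → ℝ≥0∞} (hu : Measurable u) :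
    ∫⁻ x, u (R * x - b) = ENNReal.ofReal R⁻¹ * ∫⁻ x, u x := by
  rw [← lintegral_map (g := fun x => R * x - b) hu (by fun_prop), map_mul_sub_volume hR,
    lintegral_smul_measure, smul_eq_mul]

lemma setLIntegral_Ioo_comp_mul_sub (hR : 0 < R) (b p q : ℝ) {u : ℝ → ℝ≥0∞} (hu : Measurable u) :
    ∫⁻ x in Ioo p q, u (R * x - b) =
      ENNReal.ofReal R⁻¹ * ∫⁻ x in Ioo (R * p - b) (R * q - b), u x := by
  have hpre : (fun x => R * x - b) ⁻¹' Ioo (R * p - b) (R * q - b) = Ioo p q := by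
    ext x
    simp only [mem_preimage, mem_Ioo, sub_lt_sub_iff_right, mul_lt_mul_iff_right₀ hR]
  rw [← hpre, ← setLIntegral_map (g := fun x => R * x - b) measurableSet_Ioo hu (by fun_prop),
    map_mul_sub_volume hR, setLIntegral_smul_measure, smul_eq_mul]

lemma integral_comp_mul_sub_volume (hR : 0 < R) (b : ℝ) (f : ℝ → ℝ) :
    ∫ x, f (R * x - b) = R⁻¹ * ∫ x, f x := by
  rw [Measure.integral_comp_mul_left (fun y => f (y - b)) R, integral_sub_right_eq_self,
    abs_of_pos (inv_pos.2 hR), smul_eq_mul]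

end Affine

section HilbertIntegral

/-- The Hilbert transform of `f` at `x` as an absolutely convergent integral. It is meant for
points `x` off the topological support of `f`, where the principal value reduces to it. -/
def hilbertIntegral (f : ℝ → ℝ) (x : ℝ) : ℝ := ∫ y, f y / (x - y)

variable {f g : ℝ → ℝ} {x : ℝ}

lemma exists_forall_abs_sub_lt_eq_zero (hx : x ∉ tsupport f) :
    ∃ ε > 0, ∀ y, |x - y| < ε → f y = 0 := by
  obtain ⟨ε, hε, h⟩ := Metric.eventually_nhds_iff.1 (notMem_tsupport_iff_eventuallyEq.1 hx)
  exact ⟨ε, hε, fun y hy => h (by rwa [dist_comm, Real.dist_eq])⟩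

lemma integrable_div_sub (hf : Integrable f) (hx : x ∉ tsupport f) :
    Integrable (fun y => f y / (x - y)) := by
  obtain ⟨ε, hε, hfε⟩ := exists_forall_abs_sub_lt_eq_zero hx
  refine (hf.norm.const_mul ε⁻¹).mono'
    (hf.aestronglyMeasurable.aemeasurable.div (by fun_prop)).aestronglyMeasurable
    (.of_forall fun y => ?_)
  rcases lt_or_ge |x - y| ε with hy | hy
  · simp [hfε y hy]
  · rw [norm_div, div_eq_inv_mul]
    gcongr
    exact hy

lemma Hil_eq_hilbertIntegral (hx : x ∉ tsupport f) : Hil f x = hilbertIntegral f x := by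
  obtain ⟨ε, hε, hfε⟩ := exists_forall_abs_sub_lt_eq_zero hx
  refine (tendsto_const_nhds.congr' ?_).limUnder_eq
  filter_upwards [Ioo_mem_nhdsGT hε] with δ hδ
  refine (setIntegral_eq_integral_of_forall_compl_eq_zero fun y hy => ?_).symm
  rw [hfε y ((not_lt.1 hy).trans_lt hδ.2), zero_div]

lemma measurable_hilbertIntegral (hf : Measurable f) : Measurable (hilbertIntegral f) := by
  have hkernel : Measurable fun p : ℝ × ℝ => f p.2 / (p.1 - p.2) := by fun_prop
  exact hkernel.stronglyMeasurable.integral_prod_right.measurable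

lemma hilbertIntegral_add (hf : Integrable f) (hg : Integrable g) (hxf : x ∉ tsupport f)
    (hxg : x ∉ tsupport g) :
    hilbertIntegral (f + g) x = hilbertIntegral f x + hilbertIntegral g x := by
  simp only [hilbertIntegral, Pi.add_apply, add_div]
  exact integral_add (integrable_div_sub hf hxf) (integrable_div_sub hg hxg)

lemma hilbertIntegral_sub (hf : Integrable f) (hg : Integrable g) (hxf : x ∉ tsupport f)
    (hxg : x ∉ tsupport g) :
    hilbertIntegral (f - g) x = hilbertIntegral f x - hilbertIntegral g x := by
  simp only [hilbertIntegral, Pi.sub_apply, sub_div]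
  exact integral_sub (integrable_div_sub hf hxf) (integrable_div_sub hg hxg)

lemma hilbertIntegral_sum {ι : Type*} (s : Finset ι) {f : ι → ℝ → ℝ}
    (hf : ∀ i ∈ s, Integrable (f i)) (hx : ∀ i ∈ s, x ∉ tsupport (f i)) :
    hilbertIntegral (fun y => ∑ i ∈ s, f i y) x = ∑ i ∈ s, hilbertIntegral (f i) x := by
  simp only [hilbertIntegral, Finset.sum_div]
  exact integral_finsetSum s fun i hi => integrable_div_sub (hf i hi) (hx i hi)

lemma hilbertIntegral_comp_mul_sub {R : ℝ} (hR : 0 < R) (b : ℝ) (f : ℝ → ℝ) (x : ℝ) :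
    hilbertIntegral (fun y => f (R * y - b)) x = hilbertIntegral f (R * x - b) := by
  have hscale : ∀ y, f (R * y - b) / (x - y) =
      R * (f (R * y - b) / (R * x - b - (R * y - b))) := fun y => by
    rw [sub_sub_sub_cancel_right, ← mul_sub, div_mul_eq_div_div_swap, mul_div_cancel₀ _ hR.ne']
  simp only [hilbertIntegral, hscale]
  rw [integral_const_mul, integral_comp_mul_sub_volume hR b fun s => f s / (R * x - b - s),
    mul_inv_cancel_left₀ hR.ne']

lemma tsupport_indicator_Ico_subset (p q : ℝ) :
    tsupport (indicator (Ico p q) (1 : ℝ → ℝ)) ⊆ Icc p q :=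
  closure_minimal (support_indicator_subset.trans Ico_subset_Icc_self) isClosed_Icc

lemma integrable_indicator_Ico_one (p q : ℝ) : Integrable (indicator (Ico p q) (1 : ℝ → ℝ)) :=
  (integrable_indicator_iff measurableSet_Ico).2 (integrableOn_const measure_Ico_lt_top.ne)

lemma hilbertIntegral_indicator_Ico {p q : ℝ} (hpq : p ≤ q) (hx : x ∉ Icc p q) :
    hilbertIntegral (indicator (Ico p q) 1) x = Real.log ((x - p) / (x - q)) := by
  have hind : ∀ y, indicator (Ico p q) (1 : ℝ → ℝ) y / (x - y) =
      indicator (Ico p q) (fun y => (x - y)⁻¹) y := fun y => by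
    by_cases hy : y ∈ Ico p q <;> simp [hy]
  have hzero : (0 : ℝ) ∉ uIcc (x - q) (x - p) := by
    rw [uIcc_of_le (by linarith)]
    exact fun h => hx ⟨by linarith [h.2], by linarith [h.1]⟩
  simp only [hilbertIntegral, hind]
  rw [integral_indicator measurableSet_Ico, integral_Ico_eq_integral_Ioc,
    ← intervalIntegral.integral_of_le hpq, intervalIntegral.integral_comp_sub_left (fun y => y⁻¹),
    integral_inv hzero]

end HilbertIntegral

section Dipole

/-- A unit charge density on the last subinterval of length `r` of `[0, 1/3)` together with the
opposite density on the first one. Its Hilbert transform is nonnegative off `[0, 1/3]`, and of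
size `r / (x - 1/3)` for `x` slightly to the right of `1/3`. -/
def dipole (r : ℝ) : ℝ → ℝ := indicator (Ico (1 / 3 - r) (1 / 3)) 1 - indicator (Ico 0 r) 1

variable {r x : ℝ}

@[fun_prop]
lemma measurable_dipole (r : ℝ) : Measurable (dipole r) :=
  (measurable_one.indicator measurableSet_Ico).sub (measurable_one.indicator measurableSet_Ico)

lemma integrable_dipole (r : ℝ) : Integrable (dipole r) :=
  (integrable_indicator_Ico_one _ _).sub (integrable_indicator_Ico_one _ _)

lemma support_dipole_subset (hr : r ≤ 1 / 3) :
    Function.support (dipole r) ⊆ Ico 0 (1 / 3) := by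
  intro x hx
  by_contra hx'
  have hright : x ∉ Ico (1 / 3 - r) (1 / 3) := fun h => hx' ⟨by linarith [h.1], h.2⟩
  have hleft : x ∉ Ico 0 r := fun h => hx' ⟨h.1, by linarith [h.2]⟩
  exact hx (by rw [dipole, Pi.sub_apply, indicator_of_notMem hright, indicator_of_notMem hleft,
    sub_zero])

lemma tsupport_dipole_subset (hr : r ≤ 1 / 3) :
    tsupport (dipole r) ⊆ Icc 0 (1 / 3) :=
  closure_minimal ((support_dipole_subset hr).trans Ico_subset_Icc_self) isClosed_Icc

lemma lintegral_enorm_dipole_le (hr₀ : 0 ≤ r) : ∫⁻ x, ‖dipole r x‖ₑ ≤ ENNReal.ofReal (2 * r) := by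
  calc ∫⁻ x, ‖dipole r x‖ₑ
      ≤ ∫⁻ x, (indicator (Ico (1 / 3 - r) (1 / 3)) 1 x + indicator (Ico 0 r) 1 x) := by
        refine lintegral_mono fun x => enorm_sub_le.trans_eq ?_
        simp only [enorm_indicator_eq_indicator_enorm, enorm_one, Pi.one_def]
    _ = ENNReal.ofReal r + ENNReal.ofReal r := by
        rw [lintegral_add_left (measurable_one.indicator measurableSet_Ico)]
        simp [lintegral_indicator_one measurableSet_Ico]
    _ = ENNReal.ofReal (2 * r) := by rw [← ENNReal.ofReal_add hr₀ hr₀, two_mul]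

lemma exp_neg_hilbertIntegral_dipole (hr₀ : 0 < r) (hr : r ≤ 1 / 3) (hx : x ∉ Icc 0 (1 / 3)) :
    Real.exp (-hilbertIntegral (dipole r) x) =
      (x - 1 / 3) / (x - (1 / 3 - r)) * (x / (x - r)) := by
  have hright : x ∉ Icc (1 / 3 - r) (1 / 3) := fun h => hx ⟨by linarith [h.1], h.2⟩
  have hleft : x ∉ Icc 0 r := fun h => hx ⟨h.1, by linarith [h.2]⟩
  have hlr : x < 0 ∨ 1 / 3 < x := by rwa [mem_Icc, not_and_or, not_le, not_le] at hx
  have hpos₁ : 0 < (x - 1 / 3) / (x - (1 / 3 - r)) := by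
    rcases hlr with h | h
    exacts [div_pos_of_neg_of_neg (by linarith) (by linarith), div_pos (by linarith) (by linarith)]
  have hpos₂ : 0 < x / (x - r) := by
    rcases hlr with h | h
    exacts [div_pos_of_neg_of_neg h (by linarith), div_pos (by linarith) (by linarith)]
  rw [dipole, hilbertIntegral_sub (integrable_indicator_Ico_one _ _)
    (integrable_indicator_Ico_one _ _) (fun h => hright (tsupport_indicator_Ico_subset _ _ h))
    (fun h => hleft (tsupport_indicator_Ico_subset _ _ h)),
    hilbertIntegral_indicator_Ico (by linarith) hright, hilbertIntegral_indicator_Ico hr₀.le hleft,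
    sub_zero, neg_sub, sub_eq_add_neg, ← Real.log_inv, inv_div, add_comm,
    Real.exp_add, Real.exp_log hpos₁, Real.exp_log hpos₂]

lemma hilbertIntegral_dipole_nonneg (hr₀ : 0 < r) (hr : r ≤ 1 / 3) (hx : x ∉ Icc 0 (1 / 3)) :
    0 ≤ hilbertIntegral (dipole r) x := by
  rw [← neg_nonpos, ← Real.exp_le_one_iff, exp_neg_hilbertIntegral_dipole hr₀ hr hx]
  have hpos : 0 < (x - (1 / 3 - r)) * (x - r) := by
    rw [mem_Icc, not_and_or, not_le, not_le] at hx
    rcases hx with h | h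
    exacts [mul_pos_of_neg_of_neg (by linarith) (by linarith), mul_pos (by linarith) (by linarith)]
  rw [div_mul_div_comm, div_le_one hpos]
  nlinarith

end Dipole

section Cells

/-- The affine coordinate on the `i`-th of the `M` equal cells into which the middle third
`[1/3, 2/3)` of the unit interval is divided: that cell is where it takes its values in `[0, 1)`. -/
def cellCoord (M i : ℕ) (x : ℝ) : ℝ := 3 * M * x - (M + i)

/-- The sum of the copies of `u` rescaled from `[0, 1)` to each of the `M` equal cells of the
middle third `[1/3, 2/3)`. -/
def cellSum {E : Type*} [AddCommMonoid E] (M : ℕ) (u : ℝ → E) (x : ℝ) : E :=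
  ∑ i ∈ Finset.range M, u (cellCoord M i x)

variable {M i j : ℕ} {x : ℝ}

lemma cellCoord_notMem_Icc (hx : x ∉ Icc 0 1) (hi : i < M) : cellCoord M i x ∉ Icc 0 1 := by
  have hiM : (i : ℝ) + 1 ≤ M := by exact_mod_cast hi
  refine fun h => hx ⟨?_, ?_⟩ <;> rw [cellCoord, mem_Icc] at h <;> nlinarith

lemma mem_Icc_of_cellCoord_mem (hi : i < M) (h : cellCoord M i x ∈ Icc 0 1) :
    x ∈ Icc (1 / 3) (2 / 3) := by
  have hiM : (i : ℝ) + 1 ≤ M := by exact_mod_cast hi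
  have hi₀ : (0 : ℝ) ≤ i := i.cast_nonneg
  rw [cellCoord, mem_Icc] at h
  constructor <;> nlinarith

lemma one_third_lt_of_cellCoord_pos (h : 0 < cellCoord M i x) : 1 / 3 < x := by
  have hM : (0 : ℝ) ≤ M := M.cast_nonneg
  have hi₀ : (0 : ℝ) ≤ i := i.cast_nonneg
  rw [cellCoord] at h
  nlinarith

lemma cellCoord_notMem_Icc_of_ne (hij : j ≠ i) (h : cellCoord M i x ∈ Ioo 0 1) :
    cellCoord M j x ∉ Icc 0 1 := by
  intro h'
  rw [cellCoord, mem_Ioo] at h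
  rw [cellCoord, mem_Icc] at h'
  rcases hij.lt_or_gt with hji | hji
  · have : (j : ℝ) + 1 ≤ i := mod_cast hji
    linarith
  · have : (i : ℝ) + 1 ≤ j := mod_cast hji
    linarith

lemma eq_of_cellCoord_mem_Ico (h : cellCoord M i x ∈ Ico 0 1) (h' : cellCoord M j x ∈ Ico 0 1) :
    i = j := by
  rw [cellCoord, mem_Ico] at h h'
  have hij : (i : ℝ) < j + 1 := by linarith
  have hji : (j : ℝ) < i + 1 := by linarith
  norm_cast at hij hji
  omega

section AddCommMonoid

variable {E : Type*} [AddCommMonoid E] {u : ℝ → E}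

lemma exists_ne_zero_of_cellSum_ne_zero (h : cellSum M u x ≠ 0) :
    ∃ i < M, u (cellCoord M i x) ≠ 0 := by
  obtain ⟨i, hi, h⟩ := Finset.exists_ne_zero_of_sum_ne_zero h
  exact ⟨i, Finset.mem_range.1 hi, h⟩

lemma cellSum_eq_of_cellCoord_mem (hu : Function.support u ⊆ Ico 0 1) (hi : i < M)
    (hx : cellCoord M i x ∈ Ico 0 1) : cellSum M u x = u (cellCoord M i x) :=
  Finset.sum_eq_single i
    (fun _ _ hji => by_contra fun h => hji (eq_of_cellCoord_mem_Ico (hu h) hx))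
    (fun h => (h (Finset.mem_range.2 hi)).elim)

lemma cellSum_eq_zero_or_exists (hu : Function.support u ⊆ Ico 0 1) :
    cellSum M u x = 0 ∨
      ∃ i < M, cellCoord M i x ∈ Ico 0 1 ∧ cellSum M u x = u (cellCoord M i x) := by
  refine or_iff_not_imp_left.2 fun h => ?_
  obtain ⟨i, hi, hne⟩ := exists_ne_zero_of_cellSum_ne_zero h
  exact ⟨i, hi, hu hne, cellSum_eq_of_cellCoord_mem hu hi (hu hne)⟩

@[fun_prop]
lemma measurable_cellSum [MeasurableSpace E] [MeasurableAdd₂ E] (hu : Measurable u) :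
    Measurable (cellSum M u) := by
  unfold cellSum cellCoord
  fun_prop

end AddCommMonoid

lemma coe_cellSum (M : ℕ) (u : ℝ → NNReal) (x : ℝ) :
    ((cellSum M u x : NNReal) : ℝ≥0∞) = cellSum M (fun y => (u y : ℝ≥0∞)) x :=
  ENNReal.ofNNReal_finsetSum _ _

lemma setLIntegral_Ioo_cellSum (hM : M ≠ 0) {u : ℝ → ℝ≥0∞} (hu : Measurable u) (a b : ℝ) :
    ∫⁻ y in Ioo a b, cellSum M u y = ENNReal.ofReal (3 * M)⁻¹ *
      ∑ i ∈ Finset.range M, ∫⁻ y in Ioo (cellCoord M i a) (cellCoord M i b), u y := by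
  unfold cellSum cellCoord
  rw [lintegral_finsetSum _ fun i _ => by fun_prop, Finset.mul_sum]
  exact Finset.sum_congr rfl fun i _ => setLIntegral_Ioo_comp_mul_sub (by positivity) _ _ _ hu

lemma lintegral_cellSum (hM : M ≠ 0) {u : ℝ → ℝ≥0∞} (hu : Measurable u) :
    ∫⁻ y, cellSum M u y = ENNReal.ofReal 3⁻¹ * ∫⁻ y, u y := by
  have hM' : (0 : ℝ) < M := by positivity
  unfold cellSum cellCoord
  rw [lintegral_finsetSum _ fun i _ => by fun_prop]
  simp only [lintegral_comp_mul_sub (by positivity : (0 : ℝ) < 3 * M) _ hu, Finset.sum_const,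
    Finset.card_range, nsmul_eq_mul, ← mul_assoc]
  rw [← ENNReal.ofReal_natCast, ← ENNReal.ofReal_mul hM'.le, mul_inv, mul_left_comm,
    mul_inv_cancel₀ hM'.ne', mul_one]

lemma integrable_comp_cellCoord {f : ℝ → ℝ} (hM : M ≠ 0) (hf : Integrable f) (i : ℕ) :
    Integrable fun y => f (cellCoord M i y) :=
  (hf.comp_sub_right (M + i : ℝ)).comp_mul_left' (by positivity)

lemma integrable_cellSum {f : ℝ → ℝ} (hM : M ≠ 0) (hf : Integrable f) :
    Integrable (cellSum M f) :=
  integrable_finsetSum _ fun i _ => integrable_comp_cellCoord hM hf i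

lemma notMem_tsupport_comp_cellCoord {f : ℝ → ℝ} (hx : cellCoord M i x ∉ tsupport f) :
    x ∉ tsupport fun y => f (cellCoord M i y) :=
  fun h => hx (tsupport_comp_subset_preimage f (f := cellCoord M i)
    (by unfold cellCoord; fun_prop) h)

lemma notMem_tsupport_cellSum {f : ℝ → ℝ} (hx : ∀ i < M, cellCoord M i x ∉ tsupport f) :
    x ∉ tsupport (cellSum M f) := by
  have hvanish : ∀ i ∈ Finset.range M, ∀ᶠ y in 𝓝 x, f (cellCoord M i y) = 0 := fun i hi =>
    notMem_tsupport_iff_eventuallyEq.1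
      (notMem_tsupport_comp_cellCoord (hx i (Finset.mem_range.1 hi)))
  rw [notMem_tsupport_iff_eventuallyEq]
  filter_upwards [(Finset.eventually_all _).2 hvanish] with y hy using Finset.sum_eq_zero hy

lemma hilbertIntegral_cellSum {f : ℝ → ℝ} (hM : M ≠ 0) (hf : Integrable f)
    (hx : ∀ i < M, cellCoord M i x ∉ tsupport f) :
    hilbertIntegral (cellSum M f) x =
      ∑ i ∈ Finset.range M, hilbertIntegral f (cellCoord M i x) := by
  refine (hilbertIntegral_sum _ (fun i _ => integrable_comp_cellCoord hM hf i) fun i hi =>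
    notMem_tsupport_comp_cellCoord (hx i (Finset.mem_range.1 hi))).trans ?_
  exact Finset.sum_congr rfl fun i _ => hilbertIntegral_comp_mul_sub (by positivity) _ f x

end Cells

section MaximalFunction

variable {f : ℝ → ℝ} {x : ℝ}

lemma HLMax_le_iff {K : ℝ≥0∞} :
    HLMax f x ≤ K ↔ ∀ a b, a < b → x ∈ Icc a b →
      ∫⁻ y in Ioo a b, ENNReal.ofReal |f y| ≤ ENNReal.ofReal (b - a) * K := by
  simp only [HLMax, iSup_le_iff]
  refine forall₄_congr fun a b hab _ => ?_
  have hlen : ENNReal.ofReal (b - a) ≠ 0 := by simpa using hab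
  exact ENNReal.inv_mul_le_iff hlen ENNReal.ofReal_ne_top

lemma setLIntegral_Ioo_le_mul_HLMax {a b : ℝ} (hab : a < b) (hx : x ∈ Icc a b) :
    ∫⁻ y in Ioo a b, ENNReal.ofReal |f y| ≤ ENNReal.ofReal (b - a) * HLMax f x :=
  HLMax_le_iff.1 le_rfl a b hab hx

lemma HLMax_const_mul_le {c : ℝ} (hc : 0 ≤ c) :
    HLMax (fun y => c * f y) x ≤ ENNReal.ofReal c * HLMax f x := by
  refine HLMax_le_iff.2 fun a b hab hx => ?_
  simp only [abs_mul, abs_of_nonneg hc, ENNReal.ofReal_mul hc]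
  rw [lintegral_const_mul' _ _ ENNReal.ofReal_ne_top, mul_left_comm]
  gcongr
  exact setLIntegral_Ioo_le_mul_HLMax hab hx

lemma MOrlicz_le_of_le_mul {Φ : ℝ → ℝ} {C κ : ℝ} (hκ : 1 ≤ κ) (hΦ : ∀ t ∈ Icc 0 C, Φ t ≤ κ * t)
    (hf : ∀ y, |f y| ≤ C) : MOrlicz Φ f x ≤ ENNReal.ofReal κ * max 1 (HLMax f x) := by
  rcases eq_or_ne (HLMax f x) ⊤ with htop | htop
  · simp [htop, ENNReal.mul_top, zero_lt_one.trans_le hκ]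
  have hκ₀ : 0 < κ := by linarith
  set m := max 1 (HLMax f x).toReal with hm
  have hm₁ : 1 ≤ m := le_max_left _ _
  have hmax : ENNReal.ofReal m = max 1 (HLMax f x) := by
    rw [hm, ENNReal.ofReal_max, ENNReal.ofReal_one, ENNReal.ofReal_toReal htop]
  have hl : 0 < κ * m := by positivity
  have hl₁ : 1 ≤ κ * m := one_le_mul_of_one_le_of_one_le hκ hm₁
  have hpoint : ∀ y, ENNReal.ofReal (Φ (|f y| / (κ * m))) ≤
      ENNReal.ofReal m⁻¹ * ENNReal.ofReal |f y| := fun y => by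
    rw [← ENNReal.ofReal_mul (by positivity)]
    refine ENNReal.ofReal_le_ofReal ((hΦ _ ⟨by positivity, ?_⟩).trans_eq (by field_simp))
    exact (div_le_self (abs_nonneg _) hl₁).trans (hf y)
  refine iSup₂_le fun a b => iSup₂_le fun hab hx => sInf_le ⟨κ * m, hl, ?_, ?_⟩
  · rw [ENNReal.ofReal_mul hκ₀.le, hmax]
  calc ∫⁻ y in Ioo a b, ENNReal.ofReal (Φ (|f y| / (κ * m)))
      ≤ ∫⁻ y in Ioo a b, ENNReal.ofReal m⁻¹ * ENNReal.ofReal |f y| := lintegral_mono hpoint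
    _ = ENNReal.ofReal m⁻¹ * ∫⁻ y in Ioo a b, ENNReal.ofReal |f y| :=
        lintegral_const_mul' _ _ ENNReal.ofReal_ne_top
    _ ≤ ENNReal.ofReal m⁻¹ * (ENNReal.ofReal (b - a) * ENNReal.ofReal m) := by
        gcongr
        rw [hmax]
        exact (setLIntegral_Ioo_le_mul_HLMax hab hx).trans (by gcongr; exact le_max_right _ _)
    _ = ENNReal.ofReal (b - a) := by
        rw [mul_left_comm, ← ENNReal.ofReal_mul (by positivity), inv_mul_cancel₀ (by positivity),
          ENNReal.ofReal_one, mul_one]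

end MaximalFunction

section MaximalFunctionCellSum

variable {M i : ℕ} {x a b : ℝ}

lemma card_filter_natCast_mem_Icc_le (M : ℕ) {p q : ℝ} (hpq : p ≤ q) :
    (((Finset.range M).filter fun j : ℕ => (j : ℝ) ∈ Icc p q).card : ℝ) ≤ q - p + 1 := by
  have hsub : ((Finset.range M).filter fun j : ℕ => (j : ℝ) ∈ Icc p q).card ≤
      (Finset.Icc ⌈p⌉ ⌊q⌋).card := by
    refine Finset.card_le_card_of_injOn (fun j => (j : ℤ)) (fun j hj => ?_)
      Nat.cast_injective.injOn
    obtain ⟨hp, hq⟩ := (Finset.mem_filter.1 hj).2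
    exact Finset.mem_coe.2 (Finset.mem_Icc.2 ⟨Int.ceil_le.2 hp, Int.le_floor.2 hq⟩)
  rw [Int.card_Icc] at hsub
  have hfloor : ((⌊q⌋ + 1 - ⌈p⌉).toNat : ℝ) ≤ q - p + 1 := by
    rw [← Int.cast_natCast, Int.toNat_eq_max, Int.cast_max]
    push_cast
    exact max_le (by linarith [Int.floor_le q, Int.le_ceil p]) (by linarith)
  exact (Nat.cast_le.2 hsub).trans hfloor

lemma setLIntegral_Ioo_eq_zero_of_le {u : ℝ → ℝ≥0∞}
    (hu : Function.support u ⊆ Icc (1 / 3) (2 / 3)) (hab : b ≤ 1 / 3 ∨ 2 / 3 ≤ a) :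
    ∫⁻ y in Ioo a b, u y = 0 := by
  refine setLIntegral_eq_zero measurableSet_Ioo fun y hy => ?_
  by_contra hne
  obtain ⟨hy₁, hy₂⟩ := hu hne
  rcases hab with h | h
  · exact (hy.2.trans_le h).not_ge hy₁
  · exact (h.trans_lt hy.1).not_ge hy₂

lemma setLIntegral_Ioo_cellSum_le (hM : M ≠ 0) {u : ℝ → ℝ≥0∞} (hu : Measurable u)
    (hsupp : Function.support u ⊆ Icc (1 / 3) (2 / 3)) (hab : 1 / 3 ≤ 3 * M * (b - a)) :
    ∫⁻ y in Ioo a b, cellSum M u y ≤ ENNReal.ofReal (b - a) * (5 * ∫⁻ y, u y) := by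
  set p := 3 * M * a - M - 2 / 3 with hp
  set q := 3 * M * b - M - 1 / 3 with hq
  have hcount := card_filter_natCast_mem_Icc_le M (by linarith : p ≤ q)
  have hcells : ∑ j ∈ Finset.range M, ∫⁻ y in Ioo (cellCoord M j a) (cellCoord M j b), u y ≤
      ((Finset.range M).filter fun j : ℕ => (j : ℝ) ∈ Icc p q).card * ∫⁻ y, u y := by
    rw [← nsmul_eq_mul, ← Finset.sum_const, Finset.sum_filter]
    refine Finset.sum_le_sum fun j _ => ?_
    split_ifs with hj
    · exact setLIntegral_le_lintegral _ _
    · refine (setLIntegral_Ioo_eq_zero_of_le hsupp ?_).le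
      rw [mem_Icc, not_and_or, not_le, not_le] at hj
      rw [cellCoord, cellCoord]
      exact hj.symm.imp (fun h => by linarith) (fun h => by linarith)
  rw [setLIntegral_Ioo_cellSum hM hu]
  refine (mul_le_mul_right hcells _).trans ?_
  rw [← ENNReal.ofReal_natCast, ← mul_assoc, ← mul_assoc, ← ENNReal.ofReal_mul (by positivity),
    ← ENNReal.ofReal_ofNat 5, ← ENNReal.ofReal_mul (by nlinarith)]
  refine mul_le_mul_left (ENNReal.ofReal_le_ofReal ?_) _
  -- At most `3 * M * (b - a) + 4 / 3` cells have their support met by `Ioo a b`.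
  rw [inv_mul_le_iff₀ (by positivity)]
  linarith

lemma setLIntegral_Ioo_cellSum_eq_of_cellCoord_mem (hM : M ≠ 0) {u : ℝ → ℝ≥0∞} (hu : Measurable u)
    (hsupp : Function.support u ⊆ Icc (1 / 3) (2 / 3)) (hi : i < M)
    (hx : cellCoord M i x ∈ Icc 0 1) (hxab : x ∈ Icc a b) (hab : 3 * M * (b - a) < 1 / 3) :
    ∫⁻ y in Ioo a b, cellSum M u y =
      ENNReal.ofReal (3 * M)⁻¹ * ∫⁻ y in Ioo (cellCoord M i a) (cellCoord M i b), u y := by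
  rw [setLIntegral_Ioo_cellSum hM hu, Finset.sum_eq_single_of_mem i (Finset.mem_range.2 hi)]
  refine fun j _ hji => setLIntegral_Ioo_eq_zero_of_le hsupp ?_
  have hMa : 3 * M * a ≤ 3 * M * x := by
    gcongr
    exact hxab.1
  have hMb : 3 * M * x ≤ 3 * M * b := by
    gcongr
    exact hxab.2
  rw [cellCoord, mem_Icc] at hx
  rw [cellCoord, cellCoord]
  rcases hji.lt_or_gt with h | h
  · have : (j : ℝ) + 1 ≤ i := mod_cast h
    exact .inr (by linarith)
  · have : (i : ℝ) + 1 ≤ j := mod_cast h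
    exact .inl (by linarith)

variable {w : ℝ → NNReal}

lemma HLMax_coe_le_iff {K : ℝ≥0∞} :
    HLMax (fun y => w y) x ≤ K ↔
      ∀ a b, a < b → x ∈ Icc a b → ∫⁻ y in Ioo a b, w y ≤ ENNReal.ofReal (b - a) * K := by
  simp only [HLMax_le_iff, NNReal.abs_eq, ENNReal.ofReal_coe_nnreal]

lemma HLMax_cellSum_le_of_lt (hM : M ≠ 0) (hw : Measurable w)
    (hsupp : Function.support w ⊆ Icc (1 / 3) (2 / 3)) (hx : x < 1 / 3) :
    HLMax (fun y => (cellSum M w y : NNReal)) x ≤ 5 * ∫⁻ y, w y := by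
  have hsupp' : Function.support (fun y => (w y : ℝ≥0∞)) ⊆ Icc (1 / 3) (2 / 3) :=
    fun y hy => hsupp (ENNReal.coe_ne_zero.1 hy)
  refine HLMax_coe_le_iff.2 fun a b _ hxab => ?_
  simp only [coe_cellSum]
  rcases le_or_gt (1 / 3) (3 * M * (b - a)) with hwide | hnarrow
  · exact setLIntegral_Ioo_cellSum_le hM (by fun_prop) hsupp' hwide
  rw [setLIntegral_Ioo_cellSum hM (by fun_prop), Finset.sum_eq_zero, mul_zero]
  · exact zero_le
  refine fun j _ => setLIntegral_Ioo_eq_zero_of_le hsupp' (.inl ?_)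
  have hMa : (M : ℝ) * a ≤ M * (1 / 3) := by
    gcongr
    exact hxab.1.trans hx.le
  rw [cellCoord]
  linarith

lemma HLMax_cellSum_le_of_cellCoord_mem (hM : M ≠ 0) (hw : Measurable w)
    (hsupp : Function.support w ⊆ Icc (1 / 3) (2 / 3)) (hi : i < M)
    (hx : cellCoord M i x ∈ Icc 0 1) :
    HLMax (fun y => (cellSum M w y : NNReal)) x ≤
      max (5 * ∫⁻ y, w y) (HLMax (fun y => w y) (cellCoord M i x)) := by
  have hsupp' : Function.support (fun y => (w y : ℝ≥0∞)) ⊆ Icc (1 / 3) (2 / 3) :=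
    fun y hy => hsupp (ENNReal.coe_ne_zero.1 hy)
  have hmono : StrictMono (cellCoord M i) := fun s t hst => by
    unfold cellCoord
    gcongr
  refine HLMax_coe_le_iff.2 fun a b hab hxab => ?_
  have hcell : cellCoord M i x ∈ Icc (cellCoord M i a) (cellCoord M i b) :=
    ⟨hmono.monotone hxab.1, hmono.monotone hxab.2⟩
  simp only [coe_cellSum]
  rcases le_or_gt (1 / 3) (3 * M * (b - a)) with hwide | hnarrow
  · refine (setLIntegral_Ioo_cellSum_le hM (by fun_prop) hsupp' hwide).trans ?_
    gcongr
    exact le_max_left _ _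
  have hlen : cellCoord M i b - cellCoord M i a = 3 * M * (b - a) := by
    unfold cellCoord
    ring
  calc ∫⁻ y in Ioo a b, cellSum M (fun y => (w y : ℝ≥0∞)) y
      = ENNReal.ofReal (3 * M)⁻¹ * ∫⁻ y in Ioo (cellCoord M i a) (cellCoord M i b), w y :=
        setLIntegral_Ioo_cellSum_eq_of_cellCoord_mem hM (by fun_prop) hsupp' hi hx hxab hnarrow
    _ ≤ ENNReal.ofReal (3 * M)⁻¹ * (ENNReal.ofReal (cellCoord M i b - cellCoord M i a) *
          HLMax (fun y => w y) (cellCoord M i x)) := by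
        gcongr
        exact HLMax_coe_le_iff.1 le_rfl _ _ (hmono hab) hcell
    _ = ENNReal.ofReal (b - a) * HLMax (fun y => w y) (cellCoord M i x) := by
        rw [hlen, ← mul_assoc, ← ENNReal.ofReal_mul (by positivity),
          inv_mul_cancel_left₀ (by positivity)]
    _ ≤ _ := by
        gcongr
        exact le_max_right _ _

end MaximalFunctionCellSum

section Cascade

/-- The weight of the counterexample: mass one on the middle third at stage `0`, then spread at
each stage over the `M` cells of the middle third, with a rescaled copy of the previous stage in
each cell. -/
def cascadeWeight (M : ℕ) : ℕ → ℝ → NNReal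
  | 0 => indicator (Icc (1 / 3) (2 / 3)) 3
  | n + 1 => fun x => 3 * cellSum M (cascadeWeight M n) x

/-- The test function of the counterexample: each stage adds a dipole of the size of one cell,
just to the left of the middle third, to the rescaled copies of the previous stage. -/
def cascadeFun (M : ℕ) : ℕ → ℝ → ℝ
  | 0 => 0
  | n + 1 => dipole (3 * M)⁻¹ + cellSum M (cascadeFun M n)

variable {M n i : ℕ} {x : ℝ}

@[fun_prop]
lemma measurable_cascadeWeight (M n : ℕ) : Measurable (cascadeWeight M n) := by
  induction n with
  | zero => exact Measurable.indicator measurable_const measurableSet_Icc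
  | succ n ih => exact (measurable_cellSum ih).const_mul 3

@[fun_prop]
lemma measurable_cascadeFun (M n : ℕ) : Measurable (cascadeFun M n) := by
  induction n with
  | zero => exact measurable_zero
  | succ n ih => exact (measurable_dipole _).add (measurable_cellSum ih)

lemma support_cascadeWeight_subset (M n : ℕ) :
    Function.support (cascadeWeight M n) ⊆ Icc (1 / 3) (2 / 3) := by
  induction n with
  | zero => exact support_indicator_subset
  | succ n ih =>
    intro x hx
    obtain ⟨i, hi, hne⟩ := exists_ne_zero_of_cellSum_ne_zero (right_ne_zero_of_mul hx)
    exact mem_Icc_of_cellCoord_mem hi (Icc_subset_Icc (by norm_num) (by norm_num) (ih hne))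

lemma exists_cellCoord_of_cascadeWeight_succ_ne_zero (hx : cascadeWeight M (n + 1) x ≠ 0) :
    ∃ i < M, cellCoord M i x ∈ Icc (1 / 3) (2 / 3) ∧ cascadeWeight M n (cellCoord M i x) ≠ 0 := by
  obtain ⟨i, hi, hne⟩ := exists_ne_zero_of_cellSum_ne_zero (right_ne_zero_of_mul hx)
  exact ⟨i, hi, support_cascadeWeight_subset M n hne, hne⟩

lemma Icc_one_third_two_thirds_subset_Ico : Icc (1 / 3 : ℝ) (2 / 3) ⊆ Ico 0 1 :=
  Icc_subset_Ico_right (by norm_num) |>.trans (Ico_subset_Ico_left (by norm_num))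

lemma cascadeWeight_le (M n : ℕ) (x : ℝ) : cascadeWeight M n x ≤ 3 ^ (n + 1) := by
  induction n generalizing x with
  | zero => exact (indicator_le_self' (fun _ _ => zero_le) x).trans_eq (pow_one 3).symm
  | succ n ih =>
    rw [pow_succ' 3 (n + 1), cascadeWeight]
    refine mul_le_mul_right ?_ 3
    rcases cellSum_eq_zero_or_exists (M := M) (x := x) ((support_cascadeWeight_subset M n).trans
      Icc_one_third_two_thirds_subset_Ico) with h | ⟨i, _, _, h⟩
    · exact h.trans_le zero_le
    · exact h.trans_le (ih _)

lemma three_mul_ofReal_inv_three : (3 : ℝ≥0∞) * ENNReal.ofReal 3⁻¹ = 1 := by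
  rw [← ENNReal.ofReal_ofNat 3, ← ENNReal.ofReal_mul zero_le_three]
  norm_num

lemma lintegral_cascadeWeight (hM : M ≠ 0) (n : ℕ) : ∫⁻ x, cascadeWeight M n x = 1 := by
  induction n with
  | zero =>
    have hind : ∀ x, (cascadeWeight M 0 x : ℝ≥0∞) =
        indicator (Icc (1 / 3) (2 / 3)) (fun _ => 3) x := fun x => ENNReal.coe_indicator _ _ x
    simp only [hind]
    rw [lintegral_indicator_const measurableSet_Icc, Real.volume_Icc, ← ENNReal.ofReal_ofNat 3,
      ← ENNReal.ofReal_mul zero_le_three]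
    norm_num
  | succ n ih =>
    simp only [cascadeWeight, ENNReal.coe_mul, coe_cellSum]
    rw [lintegral_const_mul _ (by fun_prop), lintegral_cellSum hM (by fun_prop), ih,
      ENNReal.coe_ofNat, ← mul_assoc, three_mul_ofReal_inv_three, mul_one]

lemma integrable_cascadeFun (hM : M ≠ 0) (n : ℕ) : Integrable (cascadeFun M n) := by
  induction n with
  | zero => exact integrable_zero _ _ _
  | succ n ih => exact (integrable_dipole _).add (integrable_cellSum hM ih)

lemma inv_three_mul_natCast_le (M : ℕ) : (3 * M : ℝ)⁻¹ ≤ 1 / 3 := by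
  rw [mul_inv, one_div]
  exact mul_le_of_le_one_right (by norm_num) (Nat.cast_inv_le_one M)

lemma support_cascadeFun_subset (M n : ℕ) :
    Function.support (cascadeFun M n) ⊆ Ico 0 1 := by
  induction n with
  | zero => simp [cascadeFun]
  | succ n ih =>
    refine (Function.support_add _ _).trans (union_subset ?_ fun x hx => ?_)
    · exact (support_dipole_subset (inv_three_mul_natCast_le M)).trans
        (Ico_subset_Ico_right (by norm_num))
    · obtain ⟨i, hi, hne⟩ := exists_ne_zero_of_cellSum_ne_zero hx
      exact Icc_one_third_two_thirds_subset_Ico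
        (mem_Icc_of_cellCoord_mem hi (Ico_subset_Icc_self (ih hne)))

lemma tsupport_cascadeFun_subset (M n : ℕ) : tsupport (cascadeFun M n) ⊆ Icc 0 1 :=
  closure_minimal ((support_cascadeFun_subset M n).trans Ico_subset_Icc_self) isClosed_Icc

section HilbertTransform

lemma notMem_tsupport_cascadeFun_succ (hx : x ∉ Icc 0 (1 / 3))
    (hcell : ∀ j < M, cellCoord M j x ∉ tsupport (cascadeFun M n)) :
    x ∉ tsupport (cascadeFun M (n + 1)) := by
  have hdipole := notMem_tsupport_iff_eventuallyEq.1
    fun h => hx (tsupport_dipole_subset (inv_three_mul_natCast_le M) h)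
  rw [notMem_tsupport_iff_eventuallyEq]
  filter_upwards [hdipole, notMem_tsupport_iff_eventuallyEq.1 (notMem_tsupport_cellSum hcell)]
    with y hy₁ hy₂
  rw [cascadeFun, Pi.add_apply, hy₁, hy₂, Pi.zero_apply, add_zero]

lemma hilbertIntegral_cascadeFun_succ (hM : M ≠ 0) (hx : x ∉ Icc 0 (1 / 3))
    (hcell : ∀ j < M, cellCoord M j x ∉ tsupport (cascadeFun M n)) :
    hilbertIntegral (cascadeFun M (n + 1)) x = hilbertIntegral (dipole (3 * M)⁻¹) x +
      ∑ j ∈ Finset.range M, hilbertIntegral (cascadeFun M n) (cellCoord M j x) := by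
  rw [cascadeFun, hilbertIntegral_add (integrable_dipole _)
    (integrable_cellSum hM (integrable_cascadeFun hM n))
    (fun h => hx (tsupport_dipole_subset (inv_three_mul_natCast_le M) h))
    (notMem_tsupport_cellSum hcell),
    hilbertIntegral_cellSum hM (integrable_cascadeFun hM n) hcell]

lemma hilbertIntegral_cascadeFun_nonneg (hM : M ≠ 0) (n : ℕ) (hx : x ∉ Icc 0 1) :
    0 ≤ hilbertIntegral (cascadeFun M n) x := by
  induction n generalizing x with
  | zero => simp [hilbertIntegral, cascadeFun]
  | succ n ih =>
    have hx' : x ∉ Icc 0 (1 / 3) := fun h => hx ⟨h.1, by linarith [h.2]⟩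
    have hcell : ∀ j < M, cellCoord M j x ∉ Icc 0 1 := fun j hj => cellCoord_notMem_Icc hx hj
    rw [hilbertIntegral_cascadeFun_succ hM hx'
      fun j hj h => hcell j hj (tsupport_cascadeFun_subset M n h)]
    exact add_nonneg
      (hilbertIntegral_dipole_nonneg (by positivity) (inv_three_mul_natCast_le M) hx')
      (Finset.sum_nonneg fun j hj => ih (hcell j (Finset.mem_range.1 hj)))

lemma forall_cellCoord_notMem_tsupport_cascadeFun (hi : cellCoord M i x ∈ Ioo 0 1)
    (hix : cellCoord M i x ∉ tsupport (cascadeFun M n)) (j : ℕ) :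
    cellCoord M j x ∉ tsupport (cascadeFun M n) := by
  rcases eq_or_ne j i with rfl | hji
  · exact hix
  · exact fun h => cellCoord_notMem_Icc_of_ne hji hi (tsupport_cascadeFun_subset M n h)

lemma notMem_tsupport_cascadeFun_of_cascadeWeight_ne_zero (hx : cascadeWeight M n x ≠ 0) :
    x ∉ tsupport (cascadeFun M n) := by
  induction n generalizing x with
  | zero => simp [cascadeFun, tsupport]
  | succ n ih =>
    obtain ⟨i, _, hmem, hne⟩ := exists_cellCoord_of_cascadeWeight_succ_ne_zero hx
    have hIoo : cellCoord M i x ∈ Ioo 0 1 := ⟨by linarith [hmem.1], by linarith [hmem.2]⟩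
    exact notMem_tsupport_cascadeFun_succ
      (fun h => (one_third_lt_of_cellCoord_pos hIoo.1).not_ge h.2)
      fun j _ => forall_cellCoord_notMem_tsupport_cascadeFun hIoo (ih hne) j

end HilbertTransform

section Majorant

/-- A self-similar pointwise majorant of `‖f‖ₑ * max 5 (HLMax w)`, where `f` and `w` are the
`n`-th stages `cascadeFun M n` and `cascadeWeight M n`. -/
def cascadeMajorant (M : ℕ) : ℕ → ℝ → ℝ≥0∞
  | 0 => 0
  | n + 1 => fun x => 15 * ‖dipole (3 * M)⁻¹ x‖ₑ + 3 * cellSum M (cascadeMajorant M n) x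

@[fun_prop]
lemma measurable_cascadeMajorant (M n : ℕ) : Measurable (cascadeMajorant M n) := by
  induction n with
  | zero => exact measurable_zero
  | succ n ih =>
    unfold cascadeMajorant
    fun_prop

lemma HLMax_cascadeWeight_succ_le (M n : ℕ) (x : ℝ) :
    HLMax (fun y => cascadeWeight M (n + 1) y) x ≤
      3 * HLMax (fun y => (cellSum M (cascadeWeight M n) y : NNReal)) x := by
  simp only [cascadeWeight, NNReal.coe_mul, NNReal.coe_ofNat]
  exact (HLMax_const_mul_le zero_le_three).trans_eq (by rw [ENNReal.ofReal_ofNat])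

lemma max_HLMax_cascadeWeight_succ_le_of_lt (hM : M ≠ 0) (n : ℕ) (hx : x < 1 / 3) :
    max 5 (HLMax (fun y => cascadeWeight M (n + 1) y) x) ≤ 15 := by
  have hcell := HLMax_cellSum_le_of_lt hM (measurable_cascadeWeight M n)
    (support_cascadeWeight_subset M n) hx
  rw [lintegral_cascadeWeight hM, mul_one] at hcell
  refine max_le (by norm_num) ((HLMax_cascadeWeight_succ_le M n x).trans ?_)
  exact (mul_le_mul_right hcell 3).trans_eq (by norm_num)

lemma max_HLMax_cascadeWeight_succ_le_of_cellCoord_mem (hM : M ≠ 0) (n : ℕ) (hi : i < M)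
    (hx : cellCoord M i x ∈ Icc 0 1) :
    max 5 (HLMax (fun y => cascadeWeight M (n + 1) y) x) ≤
      3 * max 5 (HLMax (fun y => cascadeWeight M n y) (cellCoord M i x)) := by
  have hcell := HLMax_cellSum_le_of_cellCoord_mem hM (measurable_cascadeWeight M n)
    (support_cascadeWeight_subset M n) hi hx
  rw [lintegral_cascadeWeight hM, mul_one] at hcell
  refine max_le ?_ ((HLMax_cascadeWeight_succ_le M n x).trans (mul_le_mul_right hcell 3))
  exact (le_max_left _ _).trans (le_mul_of_one_le_left' (by norm_num))

lemma enorm_cascadeFun_mul_max_HLMax_le (hM : M ≠ 0) (n : ℕ) (x : ℝ) :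
    ‖cascadeFun M n x‖ₑ * max 5 (HLMax (fun y => cascadeWeight M n y) x) ≤
      cascadeMajorant M n x := by
  induction n generalizing x with
  | zero => simp [cascadeFun]
  | succ n ih =>
    refine (mul_le_mul_left (enorm_add_le _ _) _).trans ?_
    rw [add_mul]
    refine add_le_add ?_ ?_
    · rcases eq_or_ne (dipole (3 * M)⁻¹ x) 0 with h | h
      · rw [h, enorm_zero, zero_mul]
        exact zero_le
      rw [mul_comm]
      gcongr
      exact max_HLMax_cascadeWeight_succ_le_of_lt hM n
        (support_dipole_subset (inv_three_mul_natCast_le M) h).2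
    · rcases cellSum_eq_zero_or_exists (M := M) (x := x) (support_cascadeFun_subset M n) with
        h | ⟨i, hi, hmem, h⟩
      · simp [h]
      have hmax := max_HLMax_cascadeWeight_succ_le_of_cellCoord_mem hM n hi
        (Ico_subset_Icc_self hmem)
      calc _ ≤ ‖cascadeFun M n (cellCoord M i x)‖ₑ *
            (3 * max 5 (HLMax (fun y => cascadeWeight M n y) (cellCoord M i x))) := by
            rw [h]
            gcongr
        _ ≤ 3 * cascadeMajorant M n (cellCoord M i x) := by
            rw [mul_left_comm]
            gcongr
            exact ih _
        _ ≤ 3 * cellSum M (cascadeMajorant M n) x := by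
            gcongr
            exact Finset.single_le_sum (f := fun j => cascadeMajorant M n (cellCoord M j x))
              (fun _ _ => zero_le) (Finset.mem_range.2 hi)

lemma lintegral_cascadeMajorant_le (hM : M ≠ 0) (n : ℕ) :
    ∫⁻ x, cascadeMajorant M n x ≤ n * ENNReal.ofReal (10 / M) := by
  induction n with
  | zero => simp [cascadeMajorant]
  | succ n ih =>
    unfold cascadeMajorant
    rw [lintegral_add_left (by fun_prop), lintegral_const_mul _ (by fun_prop),
      lintegral_const_mul _ (by fun_prop), lintegral_cellSum hM (by fun_prop), ← mul_assoc 3,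
      three_mul_ofReal_inv_three, one_mul]
    refine (add_le_add (mul_le_mul_right (lintegral_enorm_dipole_le (by positivity)) _) ih).trans_eq
      ?_
    rw [← ENNReal.ofReal_ofNat 15, ← ENNReal.ofReal_mul (by positivity), add_comm, Nat.cast_succ,
      add_mul, one_mul]
    congr 2
    field_simp
    norm_num

end Majorant

section ExponentialMoment

/-- A bound for `exp (-H)` on the `i`-th of the `M` cells, where `H` is the Hilbert transform of
the dipole `dipole (3 * M)⁻¹`. -/
def dipoleFactor (M i : ℕ) : ℝ := (i + 1) / (i + 2) * (M / (M - 1))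

lemma dipoleFactor_nonneg (hM : M ≠ 0) (i : ℕ) : 0 ≤ dipoleFactor M i := by
  have hM' : (1 : ℝ) ≤ M := mod_cast Nat.one_le_iff_ne_zero.2 hM
  exact mul_nonneg (by positivity) (div_nonneg (by positivity) (by linarith))

lemma mean_dipoleFactor_nonneg (hM : M ≠ 0) :
    0 ≤ (∑ i ∈ Finset.range M, dipoleFactor M i) / M :=
  div_nonneg (Finset.sum_nonneg fun i _ => dipoleFactor_nonneg hM i) M.cast_nonneg

lemma exp_neg_hilbertIntegral_dipole_le (hM : 2 ≤ M) (hi : cellCoord M i x ∈ Icc (1 / 3) (2 / 3)) :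
    Real.exp (-hilbertIntegral (dipole (3 * M)⁻¹) x) ≤ dipoleFactor M i := by
  have hM' : (2 : ℝ) ≤ M := mod_cast hM
  have hx : x ∉ Icc 0 (1 / 3) := fun h =>
    (one_third_lt_of_cellCoord_pos (one_div_pos.2 three_pos |>.trans_le hi.1)).not_ge h.2
  have hr : (3 * M : ℝ)⁻¹ ≠ 0 := by positivity
  set s := cellCoord M i x with hs
  have hxs : x = (M + i + s) * (3 * M : ℝ)⁻¹ := by
    rw [hs, cellCoord]
    field_simp
    ring
  have hthird : (1 / 3 : ℝ) = M * (3 * M : ℝ)⁻¹ := by field_simp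
  have hleft : (x - 1 / 3) / (x - (1 / 3 - (3 * M : ℝ)⁻¹)) = (i + s) / (i + s + 1) := by
    rw [show x - 1 / 3 = (i + s) * (3 * M : ℝ)⁻¹ by rw [hxs, hthird]; ring,
      show x - (1 / 3 - (3 * M : ℝ)⁻¹) = (i + s + 1) * (3 * M : ℝ)⁻¹ by rw [hxs, hthird]; ring,
      mul_div_mul_right _ _ hr]
  have hright : x / (x - (3 * M : ℝ)⁻¹) = (M + i + s) / (M + i + s - 1) := by
    rw [show x - (3 * M : ℝ)⁻¹ = (M + i + s - 1) * (3 * M : ℝ)⁻¹ by rw [hxs]; ring, hxs,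
      mul_div_mul_right _ _ hr]
  rw [exp_neg_hilbertIntegral_dipole (by positivity) (inv_three_mul_natCast_le M) hx, hleft,
    hright, dipoleFactor]
  obtain ⟨hs₁, hs₂⟩ := hi
  refine mul_le_mul ?_ ?_ (div_nonneg (by linarith) (by linarith)) (by positivity)
  · rw [div_le_div_iff₀ (by linarith) (by linarith)]
    linarith
  · rw [div_le_div_iff₀ (by linarith) (by linarith)]
    linarith

lemma exp_neg_hilbertIntegral_cascadeFun_succ_le (hM : 2 ≤ M) (hi : i < M)
    (hmem : cellCoord M i x ∈ Icc (1 / 3) (2 / 3))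
    (hix : cellCoord M i x ∉ tsupport (cascadeFun M n)) :
    Real.exp (-hilbertIntegral (cascadeFun M (n + 1)) x) ≤
      dipoleFactor M i * Real.exp (-hilbertIntegral (cascadeFun M n) (cellCoord M i x)) := by
  have hIoo : cellCoord M i x ∈ Ioo 0 1 := ⟨by linarith [hmem.1], by linarith [hmem.2]⟩
  have hcell : hilbertIntegral (cascadeFun M n) (cellCoord M i x) ≤
      ∑ j ∈ Finset.range M, hilbertIntegral (cascadeFun M n) (cellCoord M j x) := by
    rw [← Finset.add_sum_erase _ _ (Finset.mem_range.2 hi)]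
    refine le_add_of_nonneg_right (Finset.sum_nonneg fun j hj => ?_)
    exact hilbertIntegral_cascadeFun_nonneg (by omega) n
      (cellCoord_notMem_Icc_of_ne (Finset.ne_of_mem_erase hj) hIoo)
  rw [hilbertIntegral_cascadeFun_succ (by omega)
    (fun h => (one_third_lt_of_cellCoord_pos hIoo.1).not_ge h.2)
    fun j _ => forall_cellCoord_notMem_tsupport_cascadeFun hIoo hix j, neg_add, Real.exp_add]
  refine mul_le_mul (exp_neg_hilbertIntegral_dipole_le hM hmem) ?_ (Real.exp_nonneg _)
    (dipoleFactor_nonneg (by omega) i)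
  gcongr

/-- The density whose integral is the exponential moment of `-H (cascadeFun M n)` with respect to
`cascadeWeight M n`. -/
def expMomentDensity (M n : ℕ) (x : ℝ) : ℝ≥0∞ :=
  cascadeWeight M n x * ENNReal.ofReal (Real.exp (-hilbertIntegral (cascadeFun M n) x))

lemma measurable_expMomentDensity (M n : ℕ) : Measurable (expMomentDensity M n) := by
  have := measurable_hilbertIntegral (measurable_cascadeFun M n)
  unfold expMomentDensity
  fun_prop

lemma expMomentDensity_succ_le (hM : 2 ≤ M) (n : ℕ) (x : ℝ) :
    expMomentDensity M (n + 1) x ≤ ∑ i ∈ Finset.range M,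
      3 * ENNReal.ofReal (dipoleFactor M i) * expMomentDensity M n (cellCoord M i x) := by
  rcases eq_or_ne (cascadeWeight M (n + 1) x) 0 with hx | hx
  · simp [expMomentDensity, hx]
  obtain ⟨i, hi, hmem, hne⟩ := exists_cellCoord_of_cascadeWeight_succ_ne_zero hx
  have hweight : cascadeWeight M (n + 1) x = 3 * cascadeWeight M n (cellCoord M i x) :=
    congrArg (3 * ·) (cellSum_eq_of_cellCoord_mem ((support_cascadeWeight_subset M n).trans
      Icc_one_third_two_thirds_subset_Ico) hi (Icc_one_third_two_thirds_subset_Ico hmem))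
  refine le_trans ?_ (Finset.single_le_sum (fun _ _ => zero_le) (Finset.mem_range.2 hi))
  rw [expMomentDensity, expMomentDensity, hweight, ENNReal.coe_mul, ENNReal.coe_ofNat,
    mul_assoc, mul_assoc, mul_left_comm (ENNReal.ofReal (dipoleFactor M i)),
    ← ENNReal.ofReal_mul (dipoleFactor_nonneg (by omega) i)]
  gcongr
  exact exp_neg_hilbertIntegral_cascadeFun_succ_le hM hi hmem
    (notMem_tsupport_cascadeFun_of_cascadeWeight_ne_zero hne)

lemma lintegral_expMomentDensity_le (hM : 2 ≤ M) (n : ℕ) :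
    ∫⁻ x, expMomentDensity M n x ≤
      ENNReal.ofReal ((∑ i ∈ Finset.range M, dipoleFactor M i) / M) ^ n := by
  have hM₀ : M ≠ 0 := by omega
  induction n with
  | zero => simp [expMomentDensity, cascadeFun, hilbertIntegral, lintegral_cascadeWeight hM₀]
  | succ n ih =>
    have hmeas := measurable_expMomentDensity M n
    have hterm : ∀ i, ∫⁻ x, 3 * ENNReal.ofReal (dipoleFactor M i) *
        expMomentDensity M n (cellCoord M i x) =
          ENNReal.ofReal (dipoleFactor M i / M) * ∫⁻ x, expMomentDensity M n x := fun i => by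
      unfold cellCoord
      rw [lintegral_const_mul _ (by fun_prop), lintegral_comp_mul_sub (by positivity) _ hmeas,
        ← mul_assoc, mul_right_comm 3, ← ENNReal.ofReal_ofNat 3, ← ENNReal.ofReal_mul (by simp),
        ← ENNReal.ofReal_mul (by positivity)]
      congr 2
      field_simp
    refine (lintegral_mono (expMomentDensity_succ_le hM n)).trans ?_
    rw [lintegral_finsetSum _ fun i _ => by unfold cellCoord; fun_prop]
    simp only [hterm]
    rw [← Finset.sum_mul, ← ENNReal.ofReal_sum_of_nonneg, ← Finset.sum_div, pow_succ']
    · gcongr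
    · exact fun i _ => div_nonneg (dipoleFactor_nonneg hM₀ i) M.cast_nonneg

end ExponentialMoment

end Cascade

section Numerics

variable {M : ℕ}

lemma sum_dipoleFactor (M : ℕ) : ∑ i ∈ Finset.range M, dipoleFactor M i =
    (M + 1 - harmonic (M + 1)) * (M / (M - 1)) := by
  have hsum : ∀ n : ℕ, ∑ i ∈ Finset.range n, ((i : ℝ) + 1) / (i + 2) =
      n + 1 - harmonic (n + 1) := fun n => by
    induction n with
    | zero => simp
    | succ n ih =>
      rw [Finset.sum_range_succ, ih, harmonic_succ (n + 1)]
      push_cast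
      field_simp
      ring
  simp only [dipoleFactor, ← Finset.sum_mul, hsum]

lemma mean_dipoleFactor_pow_le (hM : 2 ≤ Real.log M) :
    ((∑ i ∈ Finset.range M, dipoleFactor M i) / M) ^ M ≤ Real.exp (2 - Real.log M) := by
  have hM₂ : (2 : ℝ) ≤ M := hM.trans (Real.log_le_self M.cast_nonneg)
  have hharm : Real.log M ≤ harmonic (M + 1) :=
    (Real.log_le_log (by linarith) (by push_cast; linarith)).trans (log_add_one_le_harmonic (M + 1))
  have hmean : (∑ i ∈ Finset.range M, dipoleFactor M i) / M =
      (2 - harmonic (M + 1)) / (M - 1) + 1 := by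
    rw [sum_dipoleFactor]
    have : (M : ℝ) - 1 ≠ 0 := by linarith
    field_simp
    ring
  have hle : (∑ i ∈ Finset.range M, dipoleFactor M i) / M ≤ Real.exp ((2 - Real.log M) / M) := by
    refine le_trans ?_ (Real.add_one_le_exp _)
    rw [hmean, add_le_add_iff_right, div_le_div_iff₀ (by linarith) (by linarith)]
    nlinarith
  have hM₀ : M ≠ 0 := fun h => by norm_num [h] at hM₂
  calc _ ≤ Real.exp ((2 - Real.log M) / M) ^ M :=
        pow_le_pow_left₀ (mean_dipoleFactor_nonneg hM₀) hle M
    _ = Real.exp (2 - Real.log M) := by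
      rw [← Real.exp_nat_mul, mul_div_cancel₀ _ (by linarith)]

end Numerics

section LevelSet

variable {M : ℕ}

lemma one_le_setLIntegral_Hil_add (hM : M ≠ 0) (n : ℕ) (lam : ℝ) :
    1 ≤ (∫⁻ x in {x | lam < |Hil (cascadeFun M n) x|}, cascadeWeight M n x) +
      ENNReal.ofReal (Real.exp lam) * ∫⁻ x, expMomentDensity M n x := by
  set S := {x | lam < |Hil (cascadeFun M n) x|} with hS
  have hpoint : ∀ x, (cascadeWeight M n x : ℝ≥0∞) ≤
      indicator S (fun x => (cascadeWeight M n x : ℝ≥0∞)) x +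
        ENNReal.ofReal (Real.exp lam) * expMomentDensity M n x := fun x => by
    rcases eq_or_ne (cascadeWeight M n x) 0 with h₀ | h₀
    · simp [h₀]
    by_cases hx : x ∈ S
    · rw [indicator_of_mem hx]
      exact le_self_add
    rw [hS, mem_ofPred_eq, not_lt,
      Hil_eq_hilbertIntegral (notMem_tsupport_cascadeFun_of_cascadeWeight_ne_zero h₀)] at hx
    rw [expMomentDensity, mul_left_comm, ← ENNReal.ofReal_mul (Real.exp_nonneg _), ← Real.exp_add]
    refine (le_mul_of_one_le_right' ?_).trans le_add_self
    rw [ENNReal.one_le_ofReal, Real.one_le_exp_iff]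
    linarith [le_abs_self (hilbertIntegral (cascadeFun M n) x)]
  have hmeas := measurable_expMomentDensity M n
  calc (1 : ℝ≥0∞) = ∫⁻ x, cascadeWeight M n x := (lintegral_cascadeWeight hM n).symm
    _ ≤ _ := lintegral_mono hpoint
    _ ≤ _ := by
      rw [lintegral_add_right _ (by fun_prop), lintegral_const_mul _ hmeas]
      exact add_le_add_left (lintegral_indicator_le _ _) _

lemma half_le_setLIntegral_Hil_cascadeFun (hM : 6 ≤ Real.log M) :
    1 / 2 ≤ ∫⁻ x in {x | Real.log M / 2 < |Hil (cascadeFun M M) x|}, cascadeWeight M M x := by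
  have hM₂ : 2 ≤ M := by
    exact_mod_cast (by linarith [Real.log_le_self M.cast_nonneg] : (2 : ℝ) ≤ M)
  have htail : ENNReal.ofReal (Real.exp (Real.log M / 2)) * ∫⁻ x, expMomentDensity M M x ≤
      1 / 2 := by
    calc _ ≤ ENNReal.ofReal (Real.exp (Real.log M / 2)) *
          ENNReal.ofReal (Real.exp (2 - Real.log M)) := by
          gcongr
          refine (lintegral_expMomentDensity_le hM₂ M).trans ?_
          rw [← ENNReal.ofReal_pow (mean_dipoleFactor_nonneg (by omega))]
          exact ENNReal.ofReal_le_ofReal (mean_dipoleFactor_pow_le (by linarith))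
      _ = ENNReal.ofReal (Real.exp (2 - Real.log M / 2)) := by
          rw [← ENNReal.ofReal_mul (Real.exp_nonneg _), ← Real.exp_add]
          ring_nf
      _ ≤ ENNReal.ofReal (1 / 2) := by
          have hexp : Real.exp (2 - Real.log M / 2) ≤ Real.exp (-1) :=
            Real.exp_le_exp.2 (by linarith)
          exact ENNReal.ofReal_le_ofReal (by linarith [Real.exp_neg_one_lt_d9])
      _ = 1 / 2 := by norm_num [ENNReal.ofReal_div_of_pos]
  have hone := one_le_setLIntegral_Hil_add (by omega : M ≠ 0) M (Real.log M / 2)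
  refine (ENNReal.add_le_add_iff_right (by simp : (1 / 2 : ℝ≥0∞) ≠ ⊤)).1 ?_
  rw [ENNReal.add_halves]
  exact hone.trans (add_le_add_right htail _)

end LevelSet

section Growth

variable {Φ : ℝ → ℝ} {t : ℝ}

lemma one_lt_log_exp_exp_one_add (ht : 0 ≤ t) :
    1 < Real.log (Real.exp (Real.exp 1) + t) := by
  rw [Real.lt_log_iff_exp_lt (by positivity)]
  exact (Real.exp_lt_exp.2 (Real.one_lt_exp_iff.2 one_pos)).trans_le (le_add_of_nonneg_right ht)

lemma log_log_exp_exp_one_add_le {M : ℕ} (hM : 4 ≤ M) (ht : t ∈ Icc 0 (3 ^ (M + 1))) :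
    Real.log (Real.log (Real.exp (Real.exp 1) + t)) ≤ 2 * Real.log M := by
  have hM' : (4 : ℝ) ≤ M := mod_cast hM
  have hthree : (3 : ℝ) ≤ Real.exp 2 := by linarith [Real.add_one_le_exp 2]
  have ht' : t ≤ Real.exp (2 * (M + 1)) := by
    refine ht.2.trans ((pow_le_pow_left₀ zero_le_three hthree _).trans_eq ?_)
    rw [← Real.exp_nat_mul, mul_comm, Nat.cast_succ]
  have hexp : Real.exp (Real.exp 1) + t ≤ Real.exp ((M : ℝ) ^ 2) := by
    calc Real.exp (Real.exp 1) + t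
        ≤ Real.exp (2 * (M + 1)) + Real.exp (2 * (M + 1)) := by
          gcongr
          linarith [Real.exp_one_lt_d9]
      _ ≤ Real.exp 1 * Real.exp (2 * (M + 1)) := by
          rw [← two_mul]
          gcongr
          linarith [Real.exp_one_gt_d9]
      _ ≤ Real.exp ((M : ℝ) ^ 2) := by
          rw [← Real.exp_add]
          gcongr
          nlinarith
  have hlog := (Real.log_le_iff_le_exp (add_pos_of_pos_of_nonneg (Real.exp_pos _) ht.1)).2 hexp
  refine (Real.log_le_log (one_pos.trans (one_lt_log_exp_exp_one_add ht.1)) hlog).trans_eq ?_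
  rw [Real.log_pow, Nat.cast_ofNat]

lemma exists_forall_Icc_le_mul (hmono : MonotoneOn Φ (Ici 0)) (hzero : Φ =O[𝓝[≥] 0] id)
    {T : ℝ} (hT : 0 ≤ T) : ∃ B, ∀ t ∈ Icc 0 T, Φ t ≤ B * t := by
  obtain ⟨C, hC⟩ := hzero.bound
  obtain ⟨δ, hδ, hsmall⟩ := (mem_nhdsGE_iff_exists_Ico_subset).1 hC
  refine ⟨max C (|Φ T| / δ), fun t ht => ?_⟩
  rcases lt_or_ge t δ with h | h
  · have hbound := hsmall ⟨ht.1, h⟩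
    rw [mem_ofPred_eq, id, Real.norm_of_nonneg ht.1] at hbound
    exact (le_abs_self _).trans
      (hbound.trans (mul_le_mul_of_nonneg_right (le_max_left _ _) ht.1))
  · calc Φ t ≤ |Φ T| := (hmono ht.1 hT ht.2).trans (le_abs_self _)
      _ = |Φ T| / δ * δ := (div_mul_cancel₀ _ hδ.ne').symm
      _ ≤ max C (|Φ T| / δ) * t := by
        have hmax := le_max_right C (|Φ T| / δ)
        have hpos : 0 < δ := hδ
        gcongr

lemma eventually_forall_Icc_le_mul_log (hmono : MonotoneOn Φ (Ici 0)) (hzero : Φ =O[𝓝[≥] 0] id)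
    (hlim : Tendsto (fun t => Φ t / (t * Real.log (Real.log (Real.exp (Real.exp 1) + t))))
      atTop (𝓝 0)) {ε : ℝ} (hε : 0 < ε) :
    ∀ᶠ M : ℕ in atTop, ∀ t ∈ Icc 0 (3 ^ (M + 1)), Φ t ≤ ε * Real.log M * t := by
  obtain ⟨T, hT⟩ := eventually_atTop.1 (hlim.eventually (gt_mem_nhds (half_pos hε)))
  obtain ⟨B, hB⟩ := exists_forall_Icc_le_mul hmono hzero (le_max_right T 0)
  have hlogM : Tendsto (fun M : ℕ => ε * Real.log M) atTop atTop :=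
    (Real.tendsto_log_atTop.comp tendsto_natCast_atTop_atTop).const_mul_atTop hε
  filter_upwards [hlogM.eventually_ge_atTop B, eventually_ge_atTop 4] with M hBM hM t ht
  rcases le_or_gt t (max T 0) with h | h
  · exact (hB t ⟨ht.1, h⟩).trans (mul_le_mul_of_nonneg_right hBM ht.1)
  have ht₀ : 0 < t := (le_max_right _ _).trans_lt h
  have hlog := Real.log_pos (one_lt_log_exp_exp_one_add ht₀.le)
  have hratio := hT t ((le_max_left _ _).trans h.le)
  rw [div_lt_iff₀ (by positivity)] at hratio
  calc Φ t ≤ ε / 2 * (t * (2 * Real.log M)) := by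
        refine hratio.le.trans ?_
        gcongr
        exact log_log_exp_exp_one_add_le hM ht
    _ = ε * Real.log M * t := by ring

lemma IsYoung.isBigO_id (hΦ : IsYoung Φ) : Φ =O[𝓝[≥] 0] id := by
  refine Asymptotics.IsBigO.of_bound (Φ 1) ?_
  filter_upwards [Icc_mem_nhdsGE zero_lt_one] with t ht
  have hnonneg : 0 ≤ Φ t := hΦ.map_zero ▸ hΦ.mono (mem_Ici.2 le_rfl) ht.1 ht.1
  have hconv := hΦ.convexOn.2 (mem_Ici.2 zero_le_one) (mem_Ici.2 le_rfl) ht.1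
    (sub_nonneg.2 ht.2) (add_sub_cancel t 1)
  simp only [smul_eq_mul, mul_one, mul_zero, add_zero, hΦ.map_zero] at hconv
  rwa [Real.norm_of_nonneg hnonneg, id, Real.norm_of_nonneg ht.1, mul_comm]

end Growth

section Counterexample

variable {M : ℕ}

lemma isWeight_cascadeWeight (M n : ℕ) : IsWeight fun x => cascadeWeight M n x := by
  refine ⟨fun x => NNReal.coe_nonneg _, (locallyIntegrable_const ((3 : ℝ) ^ (n + 1))).mono
    (measurable_cascadeWeight M n).coe_nnreal_real.aestronglyMeasurable (.of_forall fun x => ?_)⟩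
  rw [NNReal.norm_eq, Real.norm_of_nonneg (by positivity)]
  exact_mod_cast cascadeWeight_le M n x

lemma lintegral_cascadeFun_mul_MOrlicz_le {Φ : ℝ → ℝ} {κ : ℝ} (hM : M ≠ 0) (hκ : 1 ≤ κ)
    (hΦ : ∀ t ∈ Icc 0 (3 ^ (M + 1)), Φ t ≤ κ * t) :
    ∫⁻ x, ENNReal.ofReal |cascadeFun M M x| * MOrlicz Φ (fun y => cascadeWeight M M y) x ≤
      ENNReal.ofReal (10 * κ) := by
  have hbound : ∀ y, |(cascadeWeight M M y : ℝ)| ≤ 3 ^ (M + 1) := fun y => by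
    rw [NNReal.abs_eq]
    exact_mod_cast cascadeWeight_le M M y
  have hpoint : ∀ x, ENNReal.ofReal |cascadeFun M M x| *
      MOrlicz Φ (fun y => cascadeWeight M M y) x ≤
        ENNReal.ofReal κ * cascadeMajorant M M x := fun x => by
    refine le_trans ?_ (mul_le_mul_right (enorm_cascadeFun_mul_max_HLMax_le hM M x) _)
    rw [← Real.enorm_eq_ofReal_abs, mul_left_comm]
    gcongr
    refine (MOrlicz_le_of_le_mul hκ hΦ hbound).trans ?_
    gcongr
    norm_num
  calc _ ≤ ENNReal.ofReal κ * ∫⁻ x, cascadeMajorant M M x := by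
        rw [← lintegral_const_mul _ (measurable_cascadeMajorant M M)]
        exact lintegral_mono hpoint
    _ ≤ ENNReal.ofReal κ * (M * ENNReal.ofReal (10 / M)) := by
        gcongr
        exact lintegral_cascadeMajorant_le hM M
    _ = ENNReal.ofReal (10 * κ) := by
        rw [← ENNReal.ofReal_natCast, ← ENNReal.ofReal_mul M.cast_nonneg,
          ← ENNReal.ofReal_mul (by linarith)]
        congr 1
        field_simp

theorem statement0_general (Φ : ℝ → ℝ) (hmono : MonotoneOn Φ (Ici 0)) (hzero : Φ =O[𝓝[≥] 0] id)
    (hlim : Tendsto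
      (fun t => Φ t / (t * Real.log (Real.log (Real.exp (Real.exp 1) + t))))
      atTop (𝓝 0))
    (c : ℝ) (hc : 0 < c) :
    ∃ (w f : ℝ → ℝ) (lam : ℝ), IsWeight w ∧ 0 < lam ∧
      (∫⁻ x, ENNReal.ofReal |f x| * MOrlicz Φ w x) < ⊤ ∧
      ENNReal.ofReal (c / lam) * (∫⁻ x, ENNReal.ofReal |f x| * MOrlicz Φ w x)
        < ∫⁻ x in {x : ℝ | lam < |Hil f x|}, ENNReal.ofReal (w x) := by
  have hε : 0 < (50 * c)⁻¹ := by positivity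
  have hlogM : Tendsto (fun M : ℕ => Real.log M) atTop atTop :=
    Real.tendsto_log_atTop.comp tendsto_natCast_atTop_atTop
  obtain ⟨M, hΦ, hκ, hlog⟩ := ((eventually_forall_Icc_le_mul_log hmono hzero hlim hε).and
    (((hlogM.const_mul_atTop hε).eventually_ge_atTop 1).and (hlogM.eventually_ge_atTop 6))).exists
  have hM : M ≠ 0 := by
    rintro rfl
    norm_num at hlog
  have hcost := lintegral_cascadeFun_mul_MOrlicz_le hM hκ hΦ
  refine ⟨fun x => cascadeWeight M M x, cascadeFun M M, Real.log M / 2,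
    isWeight_cascadeWeight M M, by linarith, hcost.trans_lt ENNReal.ofReal_lt_top, ?_⟩
  calc _ ≤ ENNReal.ofReal (c / (Real.log M / 2)) *
        ENNReal.ofReal (10 * ((50 * c)⁻¹ * Real.log M)) := by gcongr
    _ = ENNReal.ofReal (2 / 5) := by
        rw [← ENNReal.ofReal_mul (div_nonneg hc.le (by linarith))]
        congr 1
        field_simp
        norm_num
    _ < ENNReal.ofReal (1 / 2) := (ENNReal.ofReal_lt_ofReal_iff (by norm_num)).2 (by norm_num)
    _ = 1 / 2 := by norm_num [ENNReal.ofReal_div_of_pos]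
    _ ≤ _ := by
        simpa only [ENNReal.ofReal_coe_nnreal] using half_le_setLIntegral_Hil_cascadeFun hlog

end Counterexample

/-- If `Φ` is a Young function with
`Φ(t)/(t log log(e^e + t)) → 0` as `t → ∞`, then for every `c > 0` there are a
weight `w`, a function `f` with `∫ |f| M_Φ w < ∞`, and `λ > 0` such that
`w({|Hf| > λ}) > (c/λ) ∫ |f| M_Φ w`. -/
theorem statement0 (Φ : ℝ → ℝ) (hΦ : IsYoung Φ)
    (hlim : Tendsto
      (fun t => Φ t / (t * Real.log (Real.log (Real.exp (Real.exp 1) + t))))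
      atTop (𝓝 0))
    (c : ℝ) (hc : 0 < c) :
    ∃ (w f : ℝ → ℝ) (lam : ℝ), IsWeight w ∧ 0 < lam ∧
      (∫⁻ x, ENNReal.ofReal |f x| * MOrlicz Φ w x) < ⊤ ∧
      ENNReal.ofReal (c / lam) * (∫⁻ x, ENNReal.ofReal |f x| * MOrlicz Φ w x)
        < ∫⁻ x in {x : ℝ | lam < |Hil f x|}, ENNReal.ofReal (w x) :=
  statement0_general Φ hΦ.mono hΦ.isBigO_id hlim c hc

end RT

end
end

section
/- Let w : ℝ → [0,∞) be a locally integrable function that vanishes outside ∪_{l≥1} Ω_l, is constant on each set Ω_l, satisfies ∫_{[0,1]} w dx = 1, and satisfies ∫_I w dx = ∫_J w dx for every l ≥ 1, every I ∈ ℐ_l, and every J ∈ 𝒥_{l+1}. Then w(x) = Σ_{l=1}^∞ (3^k/(3^{k−1}+1))^l · χ_{Ω_l}(x) for almost every x. -/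
open MeasureTheory Set Filter Topology
open scoped ENNReal

noncomputable section

namespace RT

/-!
Because `w` lives on the sets `Ω_m`, the mass of an interval `J ∈ 𝒥_l` is carried by `P J` and by
the `3^{k-1}` intervals of `𝒥_{l+1}` that tile the middle third of `J`. By hypothesis these
`3^{k-1} + 1` pieces have equal mass, so an interval of `ℐ_l`, like one of `𝒥_{l+1}`, carries the
fraction `(3^{k-1} + 1)^{-l}` of the total. Its length is `3^{-kl}`, which determines the constant
value of `w` on `Ω_l`. Finally the `Ω_l` are pairwise disjoint, so at each point the series has at
most one nonzero term.
-/

theorem measurableSet_ivl {I : ℝ × ℝ} : MeasurableSet (ivl I) := measurableSet_Ico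

theorem volume_real_ivl {I : ℝ × ℝ} (hI : 0 ≤ len I) : volume.real (ivl I) = len I :=
  Real.volume_real_Ico_of_le (sub_nonneg.1 hI)

theorem IsTriadic.len_pos {I : ℝ × ℝ} (hI : IsTriadic I) : 0 < len I := by
  obtain ⟨j, n, hleft, hright⟩ := hI
  have hscale : (0 : ℝ) < 3 ^ j := by positivity
  rw [len, hleft, hright]
  linarith

theorem IsTriadic.eq_of_len_eq_of_mem {I J : ℝ × ℝ} (hI : IsTriadic I) (hJ : IsTriadic J)
    (hlen : len I = len J) {x : ℝ} (hxI : x ∈ ivl I) (hxJ : x ∈ ivl J) : I = J := by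
  obtain ⟨a, b⟩ := I
  obtain ⟨c, d⟩ := J
  obtain ⟨i, m, rfl, rfl⟩ := hI
  obtain ⟨j, n, rfl, rfl⟩ := hJ
  simp only [len, ivl, mem_Ico] at hlen hxI hxJ
  have hscale : (3 : ℝ) ^ i = 3 ^ j := by linarith
  rw [hscale] at hxI ⊢
  have hpos : (0 : ℝ) < 3 ^ j := by positivity
  have hmn : (m : ℝ) < n + 1 := lt_of_mul_lt_mul_left (hxI.1.trans_lt hxJ.2) hpos.le
  have hnm : (n : ℝ) < m + 1 := lt_of_mul_lt_mul_left (hxJ.1.trans_lt hxI.2) hpos.le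
  obtain rfl : m = n :=
    le_antisymm (Int.lt_add_one_iff.1 (mod_cast hmn)) (Int.lt_add_one_iff.1 (mod_cast hnm))
  rfl

theorem ivl_mid_subset (J : ℝ × ℝ) : ivl (mid J) ⊆ ivl J := by
  rintro x ⟨hleft, hright⟩
  simp only [mid] at hleft hright
  constructor <;> linarith

theorem setIntegral_Ico_eq_sum_of_monotone {E : Type*} [NormedAddCommGroup E] [NormedSpace ℝ E]
    {μ : Measure ℝ} {f : ℝ → E} {a : ℕ → ℝ} (ha : Monotone a) {n : ℕ}
    (hf : IntegrableOn f (Ico (a 0) (a n)) μ) :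
    ∫ x in Ico (a 0) (a n), f x ∂μ =
      ∑ i ∈ Finset.range n, ∫ x in Ico (a i) (a (i + 1)), f x ∂μ := by
  induction n with
  | zero => simp
  | succ n ih =>
    have hunion : Ico (a 0) (a n) ∪ Ico (a n) (a (n + 1)) = Ico (a 0) (a (n + 1)) :=
      Ico_union_Ico_eq_Ico (ha n.zero_le) (ha n.le_succ)
    rw [← hunion, integrableOn_union] at hf
    rw [← hunion, setIntegral_union Ico_disjoint_Ico_same measurableSet_Ico hf.1 hf.2, ih hf.1,
      Finset.sum_range_succ]

section Cut

/-- The left endpoint of the `i`-th triadic subinterval of `J^Δ` of length `|J|/3^k`, counted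
from the left starting at `0`; the points with `i ≤ 3^{k-1}` cut `J^Δ` into these subintervals. -/
def cut (k : ℕ) (J : ℝ × ℝ) (i : ℕ) : ℝ := (mid J).1 + i * (len J / 3 ^ k)

variable {k : ℕ} {J : ℝ × ℝ}

theorem cut_zero : cut k J 0 = (mid J).1 := by simp [cut]

theorem cut_three_pow_sub_one (hk : 1 ≤ k) : cut k J (3 ^ (k - 1)) = (mid J).2 := by
  obtain ⟨m, rfl⟩ := Nat.exists_eq_add_of_le' hk
  simp only [cut, mid, len, Nat.add_sub_cancel, Nat.cast_pow, Nat.cast_ofNat, pow_succ]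
  field_simp
  ring

theorem cut_monotone (hJ : 0 ≤ len J) : Monotone (cut k J) := by
  intro i j hij
  simp only [cut]
  gcongr

theorem ivl_mid_eq_Ico_cut (hk : 1 ≤ k) :
    ivl (mid J) = Ico (cut k J 0) (cut k J (3 ^ (k - 1))) := by
  rw [cut_zero, cut_three_pow_sub_one hk, ivl]

theorem isTriadic_cut (hk : 1 ≤ k) (hJ : IsTriadic J) (i : ℕ) :
    IsTriadic (cut k J i, cut k J (i + 1)) := by
  obtain ⟨j, n, hleft, hright⟩ := hJ
  obtain ⟨m, rfl⟩ := Nat.exists_eq_add_of_le' hk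
  refine ⟨j - (m + 1 : ℕ), (3 * n + 1) * 3 ^ m + i, ?_, ?_⟩ <;>
  · rw [zpow_sub₀ three_ne_zero, zpow_natCast]
    simp only [cut, mid, len, hleft, hright]
    push_cast
    field_simp
    ring

theorem len_cut (i : ℕ) : len (cut k J i, cut k J (i + 1)) = len J / 3 ^ k := by
  simp only [len, cut]
  push_cast
  ring

theorem setIntegral_ivl_mid_eq_sum {E : Type*} [NormedAddCommGroup E] [NormedSpace ℝ E]
    {μ : Measure ℝ} {f : ℝ → E} (hk : 1 ≤ k) (hJ : 0 ≤ len J)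
    (hf : IntegrableOn f (ivl (mid J)) μ) :
    ∫ x in ivl (mid J), f x ∂μ =
      ∑ i ∈ Finset.range (3 ^ (k - 1)), ∫ x in ivl (cut k J i, cut k J (i + 1)), f x ∂μ := by
  rw [ivl_mid_eq_Ico_cut hk] at hf ⊢
  exact setIntegral_Ico_eq_sum_of_monotone (cut_monotone hJ) hf

end Cut

section Jfam

variable {k l m : ℕ} {I J : ℝ × ℝ}

theorem pos_of_mem_Jfam (hJ : J ∈ Jfam k l) : 0 < l :=
  Nat.pos_of_ne_zero fun hl => by simp [hl, Jfam] at hJ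

theorem mem_Jfam_succ (hl : 0 < l) :
    I ∈ Jfam k (l + 1) ↔
      IsTriadic I ∧ ∃ J ∈ Jfam k l, len I = len J / 3 ^ k ∧ ivl I ⊆ ivl (mid J) := by
  obtain ⟨l, rfl⟩ := Nat.exists_eq_add_of_le' hl
  rfl

theorem isTriadic_of_mem_Jfam (hJ : J ∈ Jfam k l) : IsTriadic J := by
  match l, hJ with
  | 1, hJ =>
    obtain rfl : J = (0, 1) := hJ
    exact ⟨0, 0, by simp, by simp⟩
  | _ + 2, hJ => exact hJ.1

theorem len_of_mem_Jfam (hJ : J ∈ Jfam k (l + 1)) : len J = ((3 ^ k) ^ l)⁻¹ := by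
  induction l generalizing J with
  | zero =>
    obtain rfl : J = (0, 1) := hJ
    simp [len]
  | succ l ih =>
    obtain ⟨-, J', hJ', hlen, -⟩ := hJ
    rw [hlen, ih hJ', pow_succ, mul_inv, div_eq_mul_inv]

theorem exists_mid_superset_of_mem_Jfam (hl : 0 < l) (hlm : l < m) (hJ : J ∈ Jfam k m) :
    ∃ I ∈ Jfam k l, ivl J ⊆ ivl (mid I) := by
  induction m, hlm using Nat.le_induction generalizing J with
  | base =>
    obtain ⟨-, I, hI, -, hsub⟩ := (mem_Jfam_succ hl).1 hJ
    exact ⟨I, hI, hsub⟩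
  | succ m hlm ih =>
    obtain ⟨-, J', hJ', -, hsub⟩ := (mem_Jfam_succ (hl.trans hlm)).1 hJ
    obtain ⟨I, hI, hsub'⟩ := ih hJ'
    exact ⟨I, hI, hsub.trans ((ivl_mid_subset J').trans hsub')⟩

theorem ivl_subset_of_mem_Jfam (hJ : J ∈ Jfam k l) : ivl J ⊆ Ico 0 1 := by
  obtain rfl | hl := (Nat.one_le_iff_ne_zero.2 (pos_of_mem_Jfam hJ).ne').eq_or_lt
  · obtain rfl : J = (0, 1) := hJ
    exact Subset.rfl
  · obtain ⟨I, rfl, hsub⟩ := exists_mid_superset_of_mem_Jfam one_pos hl hJ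
    exact hsub.trans (ivl_mid_subset _)

theorem eq_of_mem_Jfam (hI : I ∈ Jfam k l) (hJ : J ∈ Jfam k l) {x : ℝ} (hxI : x ∈ ivl I)
    (hxJ : x ∈ ivl J) : I = J := by
  obtain ⟨l, rfl⟩ := Nat.exists_eq_add_of_le' (pos_of_mem_Jfam hI)
  exact (isTriadic_of_mem_Jfam hI).eq_of_len_eq_of_mem (isTriadic_of_mem_Jfam hJ)
    ((len_of_mem_Jfam hI).trans (len_of_mem_Jfam hJ).symm) hxI hxJ

theorem cut_mem_Jfam (hk : 1 ≤ k) (hJ : J ∈ Jfam k l) {i : ℕ} (hi : i < 3 ^ (k - 1)) :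
    (cut k J i, cut k J (i + 1)) ∈ Jfam k (l + 1) := by
  have htri := isTriadic_of_mem_Jfam hJ
  refine (mem_Jfam_succ (pos_of_mem_Jfam hJ)).2 ⟨isTriadic_cut hk htri i, J, hJ, len_cut i, ?_⟩
  rw [ivl_mid_eq_Ico_cut hk]
  exact Ico_subset_Ico (cut_monotone htri.len_pos.le i.zero_le)
    (cut_monotone htri.len_pos.le (Nat.succ_le_of_lt hi))

theorem Jfam_nonempty (hk : 1 ≤ k) (l : ℕ) : (Jfam k (l + 1)).Nonempty := by
  induction l with
  | zero => exact singleton_nonempty _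
  | succ l ih =>
    obtain ⟨J, hJ⟩ := ih
    exact ⟨_, cut_mem_Jfam hk hJ (i := 0) (by positivity)⟩

end Jfam

section Omega

variable {k l m : ℕ} {P : ℝ × ℝ → ℝ × ℝ} {J : ℝ × ℝ} {x : ℝ}

theorem GoodP.ivl_subset (hk : 1 ≤ k) (hP : GoodP k P) (hJ : IsTriadic J)
    (hJ01 : ivl J ⊆ Ico 0 1) : ivl (P J) ⊆ ivl J := by
  obtain ⟨-, hlen, hadj⟩ := hP J hJ hJ01
  have hshort : len (P J) ≤ len J / 3 := by
    rw [hlen]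
    exact div_le_div_of_nonneg_left hJ.len_pos.le three_pos (le_self_pow₀ (by norm_num) (by omega))
  have hpos := hJ.len_pos
  simp only [len, mid] at hshort hadj hpos
  rintro x ⟨hleft, hright⟩
  rcases hadj with hadj | hadj <;> constructor <;> linarith

theorem GoodP.disjoint_ivl_mid (hP : GoodP k P) (hJ : IsTriadic J) (hJ01 : ivl J ⊆ Ico 0 1) :
    Disjoint (ivl (P J)) (ivl (mid J)) := by
  rw [Set.disjoint_left]
  rintro x ⟨hleft, hright⟩ ⟨hmidleft, hmidright⟩
  rcases (hP J hJ hJ01).2.2 with hadj | hadj <;> linarith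

theorem mem_Omega : x ∈ Omega k P l ↔ ∃ J ∈ Jfam k l, x ∈ ivl (P J) := by
  simp only [Omega, Ifam, mem_iUnion, mem_image, exists_prop, exists_exists_and_eq_and]

theorem exists_mem_ivl_of_mem_Omega (hk : 1 ≤ k) (hP : GoodP k P) (hx : x ∈ Omega k P l) :
    ∃ J ∈ Jfam k l, x ∈ ivl (P J) ∧ x ∈ ivl J := by
  obtain ⟨J, hJ, hxP⟩ := mem_Omega.1 hx
  exact ⟨J, hJ, hxP,
    hP.ivl_subset hk (isTriadic_of_mem_Jfam hJ) (ivl_subset_of_mem_Jfam hJ) hxP⟩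

theorem disjoint_Omega_ivl_mid (hk : 1 ≤ k) (hP : GoodP k P) (hJ : J ∈ Jfam k l) :
    Disjoint (Omega k P l) (ivl (mid J)) := by
  rw [Set.disjoint_left]
  intro x hx hxmid
  obtain ⟨I, hI, hxP, hxI⟩ := exists_mem_ivl_of_mem_Omega hk hP hx
  obtain rfl : I = J := eq_of_mem_Jfam hI hJ hxI (ivl_mid_subset J hxmid)
  exact Set.disjoint_left.1
    (hP.disjoint_ivl_mid (isTriadic_of_mem_Jfam hJ) (ivl_subset_of_mem_Jfam hJ)) hxP hxmid

theorem pairwise_disjoint_Omega (hk : 1 ≤ k) (hP : GoodP k P) :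
    Pairwise (Function.onFun Disjoint (Omega k P)) := by
  refine (pairwise_disjoint_on _).2 fun l m hlm => Set.disjoint_left.2 fun x hxl hxm => ?_
  obtain ⟨I, hI, -⟩ := mem_Omega.1 hxl
  obtain ⟨J, hJ, -, hxJ⟩ := exists_mem_ivl_of_mem_Omega hk hP hxm
  obtain ⟨I', hI', hsub⟩ := exists_mid_superset_of_mem_Jfam (pos_of_mem_Jfam hI) hlm hJ
  exact Set.disjoint_left.1 (disjoint_Omega_ivl_mid hk hP hI') hxl (hsub hxJ)

theorem ivl_inter_Omega_subset (hk : 1 ≤ k) (hP : GoodP k P) (hJ : J ∈ Jfam k l) :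
    ivl J ∩ Omega k P m ⊆ ivl (P J) ∪ ivl (mid J) := by
  rintro x ⟨hxJ, hx⟩
  obtain ⟨I, hI, hxP, hxI⟩ := exists_mem_ivl_of_mem_Omega hk hP hx
  rcases lt_trichotomy l m with hlm | rfl | hml
  · obtain ⟨J', hJ', hsub⟩ := exists_mid_superset_of_mem_Jfam (pos_of_mem_Jfam hJ) hlm hI
    obtain rfl : J = J' := eq_of_mem_Jfam hJ hJ' hxJ (ivl_mid_subset J' (hsub hxI))
    exact Or.inr (hsub hxI)
  · obtain rfl : J = I := eq_of_mem_Jfam hJ hI hxJ hxI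
    exact Or.inl hxP
  · obtain ⟨I', hI', hsub⟩ := exists_mid_superset_of_mem_Jfam (pos_of_mem_Jfam hI) hml hJ
    exact absurd (hsub hxJ) (Set.disjoint_left.1 (disjoint_Omega_ivl_mid hk hP hI') hx)

theorem wk_of_mem_Omega (hk : 1 ≤ k) (hP : GoodP k P) (hx : x ∈ Omega k P (l + 1)) :
    wk k P x = alpha k ^ (l + 1) := by
  rw [wk, tsum_eq_single l, indicator_of_mem hx, mul_one]
  intro m hml
  have hdisj := pairwise_disjoint_Omega hk hP (Nat.succ_injective.ne hml.symm)
  rw [indicator_of_notMem (Set.disjoint_left.1 hdisj hx), mul_zero]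

theorem wk_of_notMem_iUnion_Omega (hx : x ∉ ⋃ l : ℕ, Omega k P (l + 1)) : wk k P x = 0 := by
  simp only [mem_iUnion, not_exists] at hx
  simp only [wk, indicator_of_notMem (hx _), mul_zero, tsum_zero]

end Omega

section Mass

variable {k l : ℕ} {P : ℝ × ℝ → ℝ × ℝ} {J : ℝ × ℝ}
  {E : Type*} [NormedAddCommGroup E] [NormedSpace ℝ E] {w : ℝ → E}

theorem setIntegral_ivl_eq_add {μ : Measure ℝ} (hk : 1 ≤ k) (hP : GoodP k P)
    (hJ : J ∈ Jfam k l) (hw : IntegrableOn w (ivl J) μ)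
    (hsupp : ∀ x, x ∉ ⋃ l : ℕ, Omega k P (l + 1) → w x = 0) :
    ∫ x in ivl J, w x ∂μ = ∫ x in ivl (P J), w x ∂μ + ∫ x in ivl (mid J), w x ∂μ := by
  have htri := isTriadic_of_mem_Jfam hJ
  have hJ01 := ivl_subset_of_mem_Jfam hJ
  have hPJ := hP.ivl_subset hk htri hJ01
  have hmid := ivl_mid_subset J
  rw [← setIntegral_union (hP.disjoint_ivl_mid htri hJ01) measurableSet_ivl (hw.mono_set hPJ)
    (hw.mono_set hmid)]
  refine setIntegral_eq_of_subset_of_forall_sdiff_eq_zero measurableSet_ivl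
    (union_subset hPJ hmid) fun x ⟨hxJ, hx⟩ => hsupp x fun hxΩ => ?_
  obtain ⟨m, hxm⟩ := mem_iUnion.1 hxΩ
  exact hx (ivl_inter_Omega_subset hk hP hJ ⟨hxJ, hxm⟩)

theorem setIntegral_ivl_eq_smul {μ : Measure ℝ} (hk : 1 ≤ k) (hP : GoodP k P)
    (hJ : J ∈ Jfam k l) (hw : IntegrableOn w (ivl J) μ)
    (hsupp : ∀ x, x ∉ ⋃ l : ℕ, Omega k P (l + 1) → w x = 0)
    (hbal : ∀ K ∈ Jfam k (l + 1), ∫ x in ivl (P J), w x ∂μ = ∫ x in ivl K, w x ∂μ) :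
    ∫ x in ivl J, w x ∂μ = ((3 : ℝ) ^ (k - 1) + 1) • ∫ x in ivl (P J), w x ∂μ := by
  have hmid : ∫ x in ivl (mid J), w x ∂μ = (3 : ℝ) ^ (k - 1) • ∫ x in ivl (P J), w x ∂μ := by
    rw [setIntegral_ivl_mid_eq_sum hk (isTriadic_of_mem_Jfam hJ).len_pos.le
        (hw.mono_set (ivl_mid_subset J)),
      Finset.sum_congr rfl fun i hi =>
        (hbal _ (cut_mem_Jfam hk hJ (Finset.mem_range.1 hi))).symm,
      Finset.sum_const, Finset.card_range, ← Nat.cast_smul_eq_nsmul ℝ]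
    push_cast
    rfl
  rw [setIntegral_ivl_eq_add hk hP hJ hw hsupp, hmid, add_smul, one_smul, add_comm]

theorem setIntegral_ivl_of_mem_Jfam {μ : Measure ℝ} [NullSingletonClass μ] (hk : 1 ≤ k)
    (hP : GoodP k P) (hw : IntegrableOn w (Icc 0 1) μ)
    (hsupp : ∀ x, x ∉ ⋃ l : ℕ, Omega k P (l + 1) → w x = 0)
    (hbal : ∀ l : ℕ, 1 ≤ l → ∀ I ∈ Ifam k P l, ∀ J ∈ Jfam k (l + 1),
      ∫ x in ivl I, w x ∂μ = ∫ x in ivl J, w x ∂μ)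
    (hJ : J ∈ Jfam k (l + 1)) :
    ∫ x in ivl J, w x ∂μ = (((3 : ℝ) ^ (k - 1) + 1) ^ l)⁻¹ • ∫ x in Icc 0 1, w x ∂μ := by
  induction l generalizing J with
  | zero =>
    obtain rfl : J = (0, 1) := hJ
    rw [pow_zero, inv_one, one_smul, ivl, integral_Icc_eq_integral_Ico]
  | succ l ih =>
    obtain ⟨I, hI⟩ := Jfam_nonempty hk l
    have hbalI := hbal (l + 1) (by omega) (P I) (mem_image_of_mem P hI)
    have hwI : IntegrableOn w (ivl I) μ :=
      hw.mono_set ((ivl_subset_of_mem_Jfam hI).trans Ico_subset_Icc_self)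
    have hne : (3 : ℝ) ^ (k - 1) + 1 ≠ 0 := by positivity
    rw [← hbalI J hJ, pow_succ', mul_inv, mul_smul, ← ih hI,
      setIntegral_ivl_eq_smul hk hP hI hwI hsupp hbalI, inv_smul_smul₀ hne]

theorem eq_alpha_pow_smul_of_mem_Omega [CompleteSpace E] (hk : 1 ≤ k) (hP : GoodP k P)
    (hw : IntegrableOn w (Icc 0 1))
    (hsupp : ∀ x, x ∉ ⋃ l : ℕ, Omega k P (l + 1) → w x = 0)
    (hbal : ∀ l : ℕ, 1 ≤ l → ∀ I ∈ Ifam k P l, ∀ J ∈ Jfam k (l + 1),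
      ∫ x in ivl I, w x = ∫ x in ivl J, w x)
    {a : E} (ha : ∀ x ∈ Omega k P (l + 1), w x = a) {x : ℝ} (hx : x ∈ Omega k P (l + 1)) :
    w x = alpha k ^ (l + 1) • ∫ y in Icc 0 1, w y := by
  obtain ⟨J, hJ, -⟩ := mem_Omega.1 hx
  obtain ⟨K, hK⟩ := Jfam_nonempty hk (l + 1)
  obtain ⟨hPJ, hlen, -⟩ := hP J (isTriadic_of_mem_Jfam hJ) (ivl_subset_of_mem_Jfam hJ)
  rw [len_of_mem_Jfam hJ, div_eq_mul_inv, ← mul_inv, ← pow_succ] at hlen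
  have hconst : ∫ y in ivl (P J), w y = len (P J) • a := by
    have hwa : EqOn w (fun _ => a) (ivl (P J)) := fun y hy => ha y (mem_Omega.2 ⟨J, hJ, hy⟩)
    rw [setIntegral_congr_fun measurableSet_ivl hwa, setIntegral_const,
      volume_real_ivl hPJ.len_pos.le]
  have hmass : len (P J) • a = (((3 : ℝ) ^ (k - 1) + 1) ^ (l + 1))⁻¹ • ∫ y in Icc 0 1, w y := by
    rw [← hconst, hbal (l + 1) (by omega) (P J) (mem_image_of_mem P hJ) K hK,
      setIntegral_ivl_of_mem_Jfam hk hP hw hsupp hbal hK]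
  rw [hlen, inv_smul_eq_iff₀ (by positivity), smul_smul, ← div_eq_mul_inv, ← div_pow] at hmass
  rw [ha x hx, hmass, alpha]

theorem statement1_general [CompleteSpace E] (hk : 1 ≤ k) (hP : GoodP k P)
    (hw : IntegrableOn w (Icc 0 1))
    (hsupp : ∀ x, x ∉ ⋃ l : ℕ, Omega k P (l + 1) → w x = 0)
    (hconst : ∀ l : ℕ, ∃ a : E, ∀ x ∈ Omega k P (l + 1), w x = a)
    (hbal : ∀ l : ℕ, 1 ≤ l → ∀ I ∈ Ifam k P l, ∀ J ∈ Jfam k (l + 1),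
      ∫ x in ivl I, w x = ∫ x in ivl J, w x) (x : ℝ) :
    w x = wk k P x • ∫ y in Icc 0 1, w y := by
  by_cases hx : x ∈ ⋃ l : ℕ, Omega k P (l + 1)
  · obtain ⟨l, hxl⟩ := mem_iUnion.1 hx
    obtain ⟨a, ha⟩ := hconst l
    rw [wk_of_mem_Omega hk hP hxl, eq_alpha_pow_smul_of_mem_Omega hk hP hw hsupp hbal ha hxl]
  · rw [hsupp x hx, wk_of_notMem_iUnion_Omega hx, zero_smul]

end Mass

/-- **Lemma 2.1, uniqueness form.** If a nonnegative locally
integrable `w` vanishes outside `⋃_{l≥1} Ω_l`, is constant on each `Ω_l`, has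
`∫_{[0,1]} w = 1`, and satisfies `∫_I w = ∫_J w` for all `l ≥ 1`, `I ∈ ℐ_l`,
`J ∈ 𝒥_{l+1}`, then `w = ∑_{l≥1} (3^k/(3^{k-1}+1))^l χ_{Ω_l}` a.e. -/
theorem statement1 (k : ℕ) (hk : 2 ≤ k) (P : ℝ × ℝ → ℝ × ℝ) (hP : GoodP k P)
    (w : ℝ → ℝ) (hw0 : ∀ x, 0 ≤ w x) (hwloc : LocallyIntegrable w volume)
    (hsupp : ∀ x : ℝ, x ∉ (⋃ l : ℕ, Omega k P (l + 1)) → w x = 0)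
    (hconst : ∀ l : ℕ, ∃ a : ℝ, ∀ x ∈ Omega k P (l + 1), w x = a)
    (hnorm : (∫ x in Icc (0:ℝ) 1, w x) = 1)
    (hbal : ∀ l : ℕ, 1 ≤ l → ∀ I ∈ Ifam k P l, ∀ J ∈ Jfam k (l + 1),
      (∫ x in ivl I, w x) = ∫ x in ivl J, w x) :
    ∀ᵐ x : ℝ, w x = wk k P x :=
  .of_forall fun x => by
    simpa only [hnorm, smul_eq_mul, mul_one] using statement1_general (by omega) hP
      (hwloc.integrableOn_isCompact isCompact_Icc) hsupp hconst hbal x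

end RT

end
end
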